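/- arXiv:1912.00140 — 9 statements merged into one kernel-verified Lean document; each statement's English description precedes it below -/
import Mathlib

section
/- The Riemann zeta value ζ(3) admits the series representation ζ(3) = (5/2) · ∑_{n=1}^∞ (-1)^{n-1} / (n³ · C(2n,n)), where the series on the right converges. -/
/-!
Apéry's approximations to `ζ(3)` are
`c(n, k) = ∑_{m=1}^n 1 / m³ + ∑_{m=1}^k (-1)^(m-1) / (2 m³ C(n, m) C(n+m, m))`.
The summand of the second sum has a Wilf–Zeilberger companion: its increment in `n` telescopes
in `m`. Hence the increment of the diagonal `c(n, n)` has a closed form, namely the summand of the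
central binomial series times `5/2`. So `c(n, n)` is exactly `5/2` times a partial sum of that
series, while its second sum is `O(1 / n)`.
-/

open Filter Finset Topology

/-- The product `C(n, k) C(n+k, k)` occurring in Apéry's construction; up to sign it is a
coefficient of the shifted Legendre polynomial of degree `n`. -/
def aperyBinom (n k : ℕ) : ℕ :=
  n.choose k * (n + k).choose k

lemma aperyBinom_zero_right (n : ℕ) : aperyBinom n 0 = 1 := by
  simp [aperyBinom]

lemma aperyBinom_self (n : ℕ) : aperyBinom n n = n.centralBinom := by
  rw [aperyBinom, Nat.choose_self, one_mul, ← two_mul, Nat.centralBinom_eq_two_mul_choose]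

lemma aperyBinom_pos {n k : ℕ} (h : k ≤ n) : 0 < aperyBinom n k :=
  Nat.mul_pos (Nat.choose_pos h) (Nat.choose_pos (Nat.le_add_left k n))

lemma succ_sq_mul_aperyBinom_succ_right (n k : ℕ) :
    (k + 1) ^ 2 * aperyBinom n (k + 1) = (n - k) * (n + k + 1) * aperyBinom n k := by
  calc (k + 1) ^ 2 * aperyBinom n (k + 1)
      = (n.choose (k + 1) * (k + 1)) * ((n + k + 1).choose (k + 1) * (k + 1)) := by
        rw [aperyBinom, ← add_assoc]; ring
    _ = (n.choose k * (n - k)) * ((n + k + 1) * (n + k).choose k) := by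
        rw [Nat.choose_succ_right_eq, ← Nat.add_one_mul_choose_eq]
    _ = (n - k) * (n + k + 1) * aperyBinom n k := by
        rw [aperyBinom]; ring

lemma succ_sq_mul_aperyBinom_succ_succ (n k : ℕ) :
    (k + 1) ^ 2 * aperyBinom (n + 1) (k + 1) = (n + k + 1) * (n + k + 2) * aperyBinom n k := by
  have choose_shift : (n + 1) * (n + k + 1).choose k = (n + k).choose k * (n + k + 1) := by
    rw [Nat.choose_mul_succ_eq, mul_comm, show n + k + 1 - k = n + 1 by omega]
  calc (k + 1) ^ 2 * aperyBinom (n + 1) (k + 1)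
      = ((n + 1).choose (k + 1) * (k + 1)) * ((n + k + 1 + 1).choose (k + 1) * (k + 1)) := by
        rw [aperyBinom, show n + 1 + (k + 1) = n + k + 1 + 1 by omega]; ring
    _ = ((n + 1) * n.choose k) * ((n + k + 1 + 1) * (n + k + 1).choose k) := by
        rw [← Nat.add_one_mul_choose_eq, ← Nat.add_one_mul_choose_eq]
    _ = n.choose k * (n + k + 2) * ((n + 1) * (n + k + 1).choose k) := by ring
    _ = (n + k + 1) * (n + k + 2) * aperyBinom n k := by
        rw [choose_shift, aperyBinom]; ring

lemma mul_succ_le_succ_sq_mul_aperyBinom {n k : ℕ} (h : k < n) :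
    n * (n + 1) ≤ (k + 1) ^ 2 * aperyBinom n (k + 1) := by
  obtain ⟨m, rfl⟩ : ∃ m, n = m + 1 := Nat.exists_eq_add_one_of_ne_zero (by omega)
  calc (m + 1) * (m + 1 + 1) ≤ (m + k + 1) * (m + k + 2) * 1 := by
        rw [mul_one]; exact Nat.mul_le_mul (by omega) (by omega)
    _ ≤ (m + k + 1) * (m + k + 2) * aperyBinom m k := by
        gcongr; exact aperyBinom_pos (Nat.lt_succ_iff.mp h)
    _ = (k + 1) ^ 2 * aperyBinom (m + 1) (k + 1) := (succ_sq_mul_aperyBinom_succ_succ m k).symm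

/-- The summand of Apéry's correction to the `n`-th partial sum of `∑ 1 / m³`, with `m = k + 1`. It
is meant for `k < n`: beyond that range the denominator vanishes. -/
def aperyTerm (K : Type*) [DivisionRing K] (n k : ℕ) : K :=
  (-1) ^ k / (2 * (k + 1) ^ 3 * aperyBinom n (k + 1))

/-- The Wilf–Zeilberger companion of `aperyTerm`: its increment in `k` is the increment of
`aperyTerm` in `n`. It is meant for `k ≤ n`. -/
def aperyCompanion (K : Type*) [DivisionRing K] (n k : ℕ) : K :=
  (-1) ^ k / ((n + 1) ^ 2 * (n + k + 1) * aperyBinom n k)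

/-- The term `m = n + 1` of the alternating series `∑_{m ≥ 1} (-1)^(m-1) / (m³ C(2m, m))`. -/
def centralBinomTerm (K : Type*) [DivisionRing K] (n : ℕ) : K :=
  (-1) ^ n / ((n + 1) ^ 3 * (n + 1).centralBinom)

lemma aperyCompanion_zero_right (K : Type*) [DivisionRing K] (n : ℕ) :
    aperyCompanion K n 0 = 1 / ((n : K) + 1) ^ 3 := by
  simp only [aperyCompanion, aperyBinom_zero_right, pow_zero, Nat.cast_zero, add_zero, Nat.cast_one,
    mul_one, ← pow_succ]

section Identities

variable (K : Type*) [Field K]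

lemma aperyTerm_succ_self (n : ℕ) : aperyTerm K (n + 1) n = 1 / 2 * centralBinomTerm K n := by
  rw [aperyTerm, centralBinomTerm, aperyBinom_self, mul_assoc, div_mul_div_comm, one_mul]

variable [CharZero K]

lemma aperyTerm_succ_sub {n k : ℕ} (h : k < n) :
    aperyTerm K (n + 1) k - aperyTerm K n k =
      aperyCompanion K n (k + 1) - aperyCompanion K n k := by
  have binom_ne : (aperyBinom n k : K) ≠ 0 := Nat.cast_ne_zero.mpr (aperyBinom_pos h.le).ne'
  have k_ne : (k + 1 : K) ≠ 0 := Nat.cast_add_one_ne_zero k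
  have n_ne : (n + 1 : K) ≠ 0 := Nat.cast_add_one_ne_zero n
  have sub_ne : (n - k : K) ≠ 0 := sub_ne_zero.mpr (Nat.cast_injective.ne h.ne')
  have add_one_ne : (n + k + 1 : K) ≠ 0 := by exact_mod_cast (n + k).succ_ne_zero
  have add_two_ne : (n + k + 2 : K) ≠ 0 := by exact_mod_cast (n + k + 1).succ_ne_zero
  have right : (aperyBinom n (k + 1) : K) =
      (n - k) * (n + k + 1) * aperyBinom n k / (k + 1) ^ 2 := by
    rw [eq_div_iff (pow_ne_zero 2 k_ne), mul_comm, ← Nat.cast_sub h.le]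
    exact_mod_cast succ_sq_mul_aperyBinom_succ_right n k
  have diag : (aperyBinom (n + 1) (k + 1) : K) =
      (n + k + 1) * (n + k + 2) * aperyBinom n k / (k + 1) ^ 2 := by
    rw [eq_div_iff (pow_ne_zero 2 k_ne), mul_comm]
    exact_mod_cast succ_sq_mul_aperyBinom_succ_succ n k
  have shift : (n + (k + 1 : ℕ) + 1 : K) = n + k + 2 := by push_cast; ring
  rw [aperyTerm, aperyTerm, aperyCompanion, aperyCompanion, right, diag, shift, pow_succ]
  field_simp
  ring

lemma aperyCompanion_self (n : ℕ) : aperyCompanion K n n = 2 * centralBinomTerm K n := by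
  have central : ((n : K) + 1) * (n + 1).centralBinom = 2 * (n + n + 1) * n.centralBinom := by
    rw [← two_mul]; exact_mod_cast n.succ_mul_centralBinom_succ
  calc aperyCompanion K n n
      = 2 * (-1) ^ n / ((n + 1) ^ 2 * (2 * (n + n + 1) * n.centralBinom)) := by
        rw [aperyCompanion, aperyBinom_self, ← mul_div_mul_left _ _ (two_ne_zero (α := K))]
        ring_nf
    _ = 2 * centralBinomTerm K n := by
        rw [← central, centralBinomTerm, ← mul_assoc, ← pow_succ, mul_div_assoc]

lemma sum_aperyTerm_succ (n : ℕ) :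
    ∑ k ∈ range (n + 1), aperyTerm K (n + 1) k =
      ∑ k ∈ range n, aperyTerm K n k + 5 / 2 * centralBinomTerm K n - 1 / ((n : K) + 1) ^ 3 := by
  have telescope : ∑ k ∈ range n, aperyTerm K (n + 1) k - ∑ k ∈ range n, aperyTerm K n k =
      2 * centralBinomTerm K n - 1 / ((n : K) + 1) ^ 3 := by
    rw [← sum_sub_distrib,
      sum_congr rfl fun k hk ↦ aperyTerm_succ_sub K (mem_range.mp hk),
      sum_range_sub, aperyCompanion_self, aperyCompanion_zero_right]
  rw [sum_range_succ, aperyTerm_succ_self]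
  linear_combination telescope

lemma sum_one_div_cube_add_sum_aperyTerm (n : ℕ) :
    ∑ m ∈ range n, 1 / ((m : K) + 1) ^ 3 + ∑ k ∈ range n, aperyTerm K n k =
      5 / 2 * ∑ m ∈ range n, centralBinomTerm K m := by
  induction n with
  | zero => simp
  | succ n ih =>
    rw [sum_range_succ, sum_aperyTerm_succ, sum_range_succ (centralBinomTerm K)]
    linear_combination ih

end Identities

section Convergence

variable (𝕜 : Type*) [RCLike 𝕜]

lemma norm_aperyTerm_le {n k : ℕ} (h : k < n) :
    ‖aperyTerm 𝕜 n k‖ ≤ 1 / ((n : ℝ) * (n + 1)) := by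
  have n_pos : (0 : ℝ) < n := by exact_mod_cast k.zero_le.trans_lt h
  have lower : n * (n + 1) ≤ 2 * (k + 1) ^ 3 * aperyBinom n (k + 1) :=
    calc n * (n + 1) ≤ (k + 1) ^ 2 * aperyBinom n (k + 1) := mul_succ_le_succ_sq_mul_aperyBinom h
      _ ≤ 2 * (k + 1) * ((k + 1) ^ 2 * aperyBinom n (k + 1)) :=
        Nat.le_mul_of_pos_left _ (by positivity)
      _ = 2 * (k + 1) ^ 3 * aperyBinom n (k + 1) := by ring
  calc ‖aperyTerm 𝕜 n k‖ = 1 / ((2 * (k + 1) ^ 3 * aperyBinom n (k + 1) : ℕ) : ℝ) := by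
        rw [← RCLike.norm_natCast (K := 𝕜), aperyTerm, norm_div, norm_pow, norm_neg, norm_one,
          one_pow]
        norm_cast
    _ ≤ 1 / ((n : ℝ) * (n + 1)) :=
        one_div_le_one_div_of_le (by positivity) (by exact_mod_cast lower)

lemma norm_sum_aperyTerm_le (n : ℕ) :
    ‖∑ k ∈ range n, aperyTerm 𝕜 n k‖ ≤ 1 / ((n : ℝ) + 1) := by
  rcases n.eq_zero_or_pos with rfl | n_pos
  · simp
  calc ‖∑ k ∈ range n, aperyTerm 𝕜 n k‖ ≤ ∑ _k ∈ range n, 1 / ((n : ℝ) * (n + 1)) :=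
        norm_sum_le_of_le _ fun k hk ↦ norm_aperyTerm_le 𝕜 (mem_range.mp hk)
    _ = 1 / ((n : ℝ) + 1) := by
        rw [sum_const, card_range, nsmul_eq_mul]
        field_simp

lemma tendsto_sum_aperyTerm :
    Tendsto (fun n ↦ ∑ k ∈ range n, aperyTerm 𝕜 n k) atTop (𝓝 0) :=
  squeeze_zero_norm (norm_sum_aperyTerm_le 𝕜) tendsto_one_div_add_atTop_nhds_zero_nat

lemma summable_one_div_nat_succ_pow {p : ℕ} (hp : 1 < p) :
    Summable fun n : ℕ ↦ 1 / ((n : 𝕜) + 1) ^ p := by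
  have real := (summable_nat_add_iff 1).mpr (Real.summable_one_div_nat_pow.mpr hp)
  refine real.of_norm_bounded fun n ↦ le_of_eq ?_
  rw [norm_div, norm_one, norm_pow, ← Nat.cast_succ, RCLike.norm_natCast]

lemma summable_centralBinomTerm : Summable (centralBinomTerm 𝕜) := by
  refine (summable_one_div_nat_succ_pow 𝕜 (by norm_num : 1 < 3)).norm.of_norm_bounded fun n ↦ ?_
  have one_le : (1 : ℝ) ≤ (n + 1).centralBinom := by
    exact_mod_cast (n + 1).centralBinom_pos
  calc ‖centralBinomTerm 𝕜 n‖ = ‖1 / ((n : 𝕜) + 1) ^ 3‖ / (n + 1).centralBinom := by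
        rw [centralBinomTerm, ← div_div, norm_div, RCLike.norm_natCast, norm_div, norm_div,
          norm_pow, norm_neg, norm_one, one_pow]
    _ ≤ ‖1 / ((n : 𝕜) + 1) ^ 3‖ := div_le_self (norm_nonneg _) one_le

lemma tsum_one_div_nat_succ_cube :
    ∑' n : ℕ, 1 / ((n : 𝕜) + 1) ^ 3 = 5 / 2 * ∑' n, centralBinomTerm 𝕜 n := by
  have cubes := (summable_one_div_nat_succ_pow 𝕜 (by norm_num : 1 < 3)).hasSum.tendsto_sum_nat
  have central := (summable_centralBinomTerm 𝕜).hasSum.tendsto_sum_nat.const_mul (5 / 2)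
  have diagonal := cubes.add (tendsto_sum_aperyTerm 𝕜)
  simp only [sum_one_div_cube_add_sum_aperyTerm, add_zero] at diagonal
  exact tendsto_nhds_unique diagonal central

end Convergence

/-- The Riemann zeta value ζ(3) admits the series representation
ζ(3) = (5/2) · ∑_{n=1}^∞ (-1)^{n-1} / (n³ · C(2n,n)), where the series converges. -/
theorem zeta_three_series :
    Summable (fun n : ℕ => ((-1 : ℂ)) ^ n / (((n : ℂ) + 1) ^ 3 * (Nat.centralBinom (n + 1) : ℂ))) ∧
    riemannZeta 3 =
      (5 / 2) * ∑' n : ℕ, ((-1 : ℂ)) ^ n / (((n : ℂ) + 1) ^ 3 * (Nat.centralBinom (n + 1) : ℂ)) := by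
  refine ⟨summable_centralBinomTerm ℂ, ?_⟩
  have zeta_eq : riemannZeta 3 = ∑' n : ℕ, 1 / ((n : ℂ) + 1) ^ 3 := by
    rw [zeta_eq_tsum_one_div_nat_add_one_cpow (by norm_num)]
    simp only [Complex.cpow_ofNat]
  exact zeta_eq.trans (tsum_one_div_nat_succ_cube ℂ)
end

section
/- Define b_{n+1} := 2·(-1)ⁿ · C(2n,n) / n² and c_{n+1} := 6·(-1)^{n+1} · C(2n,n) / n³ · (3 + 2n(H_{n-1} - H_{2n-1})) for n ≥ 1, where H_r = ∑_{k=1}^r 1/k (with H_0 = 0). Then c_2 = 12 and for every integer n ≥ 2 one has 6(3 - 8n + 5n²)·b_n + 2n(n-1)²(2n-1)·c_n + n⁴·c_{n+1} = 0. -/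
/-!
Write `gₙ = 3 / n + 2 (H_{n-1} - H_{2n-1})`, so that `c_{n+1} = -3 b_{n+1} gₙ`. Since `b` solves the
homogeneous recursion `n³ b_{n+1} = -2 (2n - 1) (n - 1)² bₙ`, variation of constants turns
`n⁴ c_{n+1} + 2n (n - 1)² (2n - 1) cₙ` into `6n (n - 1)² (2n - 1) bₙ (gₙ - g_{n-1})`. The difference
`gₙ - g_{n-1}` is a rational function of `n`, namely `-(5n - 3) / (n (n - 1) (2n - 1))`.
-/

/-- The coefficient `b_{n+1}`, for `n ≥ 1`. The index is shifted by one so that it matches the index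
of the binomial coefficient; the value at `0` is the junk value of a division by zero. -/
def bCoeff (n : ℕ) : ℚ :=
  2 * (-1) ^ n * (n.centralBinom : ℚ) / (n : ℚ) ^ 2

/-- The coefficient `c_{n+1}`, for `n ≥ 1`, with the same shift as in `bCoeff`. -/
def cCoeff (n : ℕ) : ℚ :=
  6 * (-1) ^ (n + 1) * (n.centralBinom : ℚ) / (n : ℚ) ^ 3 *
    (3 + 2 * (n : ℚ) * (harmonic (n - 1) - harmonic (2 * n - 1)))

/-- The multiplier `gₙ` in `c_{n+1} = -3 b_{n+1} gₙ`, for `n ≥ 1`. -/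
def harmonicMultiplier (n : ℕ) : ℚ :=
  3 / (n : ℚ) + 2 * (harmonic (n - 1) - harmonic (2 * n - 1))

lemma cCoeff_one : cCoeff 1 = 12 := by
  norm_num [cCoeff, Nat.centralBinom, Nat.choose]

lemma cCoeff_eq_mul {n : ℕ} (hn : n ≠ 0) :
    cCoeff n = -3 * bCoeff n * harmonicMultiplier n := by
  have hn' : (n : ℚ) ≠ 0 := Nat.cast_ne_zero.mpr hn
  unfold cCoeff bCoeff harmonicMultiplier
  field_simp
  ring

lemma succ_mul_neg_one_pow_mul_centralBinom_succ {R : Type*} [CommRing R] (n : ℕ) :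
    ((n : R) + 1) * ((-1) ^ (n + 1) * ((n + 1).centralBinom : R)) =
      -2 * (2 * n + 1) * ((-1) ^ n * (n.centralBinom : R)) := by
  have h : ((n : R) + 1) * ((n + 1).centralBinom : R) = 2 * (2 * n + 1) * n.centralBinom := by
    simpa using congrArg (Nat.cast (R := R)) n.succ_mul_centralBinom_succ
  linear_combination (-1) ^ (n + 1) * h

lemma sq_mul_bCoeff {n : ℕ} (hn : n ≠ 0) :
    (n : ℚ) ^ 2 * bCoeff n = 2 * ((-1) ^ n * (n.centralBinom : ℚ)) := by
  have hn' : (n : ℚ) ≠ 0 := Nat.cast_ne_zero.mpr hn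
  unfold bCoeff
  field_simp

lemma cube_mul_bCoeff_succ {n : ℕ} (hn : n ≠ 0) :
    ((n : ℚ) + 1) ^ 3 * bCoeff (n + 1) = -2 * (2 * n + 1) * (n : ℚ) ^ 2 * bCoeff n := by
  have hsucc := sq_mul_bCoeff n.add_one_ne_zero
  push_cast at hsucc
  linear_combination ((n : ℚ) + 1) * hsucc +
    2 * succ_mul_neg_one_pow_mul_centralBinom_succ (R := ℚ) n +
    2 * (2 * n + 1) * sq_mul_bCoeff hn

lemma harmonic_sub_harmonic_two_mul_add_one_succ (n : ℕ) :
    harmonic (n + 1) - harmonic (2 * (n + 1) + 1) =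
      harmonic n - harmonic (2 * n + 1) + 1 / ((2 * n + 2) * (2 * n + 3)) := by
  rw [show 2 * (n + 1) + 1 = 2 * n + 1 + 1 + 1 by ring, harmonic_succ n,
    harmonic_succ (2 * n + 1 + 1), harmonic_succ (2 * n + 1)]
  push_cast
  rw [show (2 * (n : ℚ) + 1 + 1 + 1) = 2 * n + 3 by ring,
    show (2 * (n : ℚ) + 1 + 1) = 2 * (n + 1) by ring]
  field_simp
  ring

lemma harmonicMultiplier_succ_sub {n : ℕ} (hn : n ≠ 0) :
    harmonicMultiplier (n + 1) - harmonicMultiplier n =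
      -(5 * n + 2) / (n * (n + 1) * (2 * n + 1)) := by
  obtain ⟨k, rfl⟩ := Nat.exists_eq_succ_of_ne_zero hn
  have hharmonic := harmonic_sub_harmonic_two_mul_add_one_succ k
  simp only [harmonicMultiplier, Nat.succ_eq_add_one, Nat.add_sub_cancel,
    show 2 * (k + 1 + 1) - 1 = 2 * (k + 1) + 1 by omega, show 2 * (k + 1) - 1 = 2 * k + 1 by omega]
  rw [hharmonic]
  push_cast
  rw [show 2 * ((k : ℚ) + 1) + 1 = 2 * k + 3 by ring]
  field_simp
  ring

lemma cCoeff_recursion {n : ℕ} (hn : n ≠ 0) :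
    6 * n * (5 * n + 2) * bCoeff n + 2 * (n + 1) * (n : ℚ) ^ 2 * (2 * n + 1) * cCoeff n +
      ((n : ℚ) + 1) ^ 4 * cCoeff (n + 1) = 0 := by
  have hdiff : (n : ℚ) * (n + 1) * (2 * n + 1) *
      (harmonicMultiplier (n + 1) - harmonicMultiplier n) = -(5 * n + 2) := by
    have hn' : (n : ℚ) ≠ 0 := Nat.cast_ne_zero.mpr hn
    rw [harmonicMultiplier_succ_sub hn]
    field_simp
  rw [cCoeff_eq_mul hn, cCoeff_eq_mul n.add_one_ne_zero]
  linear_combination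
    -3 * ((n : ℚ) + 1) * harmonicMultiplier (n + 1) * cube_mul_bCoeff_succ hn +
      6 * n * bCoeff n * hdiff

/-- With b_{n+1} := 2·(-1)ⁿ·C(2n,n)/n² and
c_{n+1} := 6·(-1)^{n+1}·C(2n,n)/n³·(3 + 2n(H_{n-1} - H_{2n-1})) for n ≥ 1,
one has c₂ = 12 and 6(3-8n+5n²)·bₙ + 2n(n-1)²(2n-1)·cₙ + n⁴·c_{n+1} = 0 for every n ≥ 2. -/
theorem h3_coefficients_recursion
    (b c : ℕ → ℚ)
    (hb : ∀ n : ℕ, 1 ≤ n →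
      b (n + 1) = 2 * (-1) ^ n * (Nat.centralBinom n : ℚ) / (n : ℚ) ^ 2)
    (hc : ∀ n : ℕ, 1 ≤ n →
      c (n + 1) = 6 * (-1) ^ (n + 1) * (Nat.centralBinom n : ℚ) / (n : ℚ) ^ 3 *
        (3 + 2 * (n : ℚ) * (harmonic (n - 1) - harmonic (2 * n - 1)))) :
    c 2 = 12 ∧
    ∀ n : ℕ, 2 ≤ n →
      6 * (3 - 8 * (n : ℚ) + 5 * (n : ℚ) ^ 2) * b n
        + 2 * (n : ℚ) * ((n : ℚ) - 1) ^ 2 * (2 * (n : ℚ) - 1) * c n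
        + (n : ℚ) ^ 4 * c (n + 1) = 0 := by
  have hb' (n : ℕ) (hn : 1 ≤ n) : b (n + 1) = bCoeff n := hb n hn
  have hc' (n : ℕ) (hn : 1 ≤ n) : c (n + 1) = cCoeff n := hc n hn
  refine ⟨(hc' 1 le_rfl).trans cCoeff_one, fun n hn => ?_⟩
  obtain ⟨m, rfl⟩ : ∃ m, n = m + 1 := ⟨n - 1, by omega⟩
  have hm : 1 ≤ m := by omega
  rw [hb' m hm, hc' m hm, hc' (m + 1) (by omega)]
  push_cast
  linear_combination cCoeff_recursion (Nat.one_le_iff_ne_zero.mp hm)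
end

section
/- With c_{n+1} := 6·(-1)^{n+1} · C(2n,n) / n³ · (3 + 2n(H_{n-1} - H_{2n-1})) for n ≥ 1, where H_r = ∑_{k=1}^r 1/k (with H_0 = 0), the ratio |c_{n+1}| / (4ⁿ · n^{-5/2}) tends to (12·log 2)/√π as n → ∞. In particular the power series ∑_{n=2}^∞ c_n φⁿ converges for every complex φ with |φ| ≤ 1/4. -/
open Filter

/-!
Stirling's formula gives `C(2n,n) ~ 4ⁿ / √(πn)`, and since `H_{n-1} - log n` tends to Euler's
constant, `H_{n-1} - H_{2n-1}` tends to `-log 2`. So the last factor of `c_{n+1}` is asymptotic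
to `-2 log 2 · n`, and `c_{n+1} ~ (-1)ⁿ · (12 log 2 / √π) · 4ⁿ n^{-5/2}`. On the closed disc
`|φ| ≤ 1/4` the geometric growth is absorbed by `φⁿ`, and `∑ n^{-5/2}` converges.
-/

open Asymptotics Real Topology

section AsymptoticEquivalence

variable {α E 𝕜 : Type*} {l : Filter α}

lemma isEquivalent_norm_norm [NormedAddCommGroup E] {u v : α → E} (h : u ~[l] v) :
    (fun x ↦ ‖u x‖) ~[l] fun x ↦ ‖v x‖ :=
  (IsBigO.of_norm_le fun x ↦ abs_norm_sub_norm_le (u x) (v x)).trans_isLittleO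
    h.isLittleO.norm_left |>.norm_right

lemma tendsto_div_of_isEquivalent_const_mul [NormedField 𝕜] {u v : α → 𝕜} {a : 𝕜}
    (h : u ~[l] fun x ↦ a * v x) (hv : ∀ᶠ x in l, v x ≠ 0) :
    Tendsto (fun x ↦ u x / v x) l (𝓝 a) := by
  refine ((h.div (IsEquivalent.refl (u := v))).congr_right ?_).tendsto_const
  filter_upwards [hv] with x hx using mul_div_cancel_right₀ a hx

end AsymptoticEquivalence

lemma summable_mul_pow_of_isBigO {A : Type*} [NormedRing A] [CompleteSpace A] {a : ℕ → A} {z : A}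
    {R s : ℝ} (hR : 0 ≤ R) (hz : R * ‖z‖ ≤ 1) (hs : s < -1)
    (ha : a =O[atTop] fun n : ℕ ↦ R ^ n * (n : ℝ) ^ s) :
    Summable fun n ↦ a n * z ^ n := by
  have hpow : (fun n ↦ z ^ n) =O[atTop] fun n ↦ ‖z‖ ^ n :=
    .of_bound' <| (eventually_norm_pow_le z).mono fun n hn ↦ by simpa using hn
  have hcancel : (fun n : ℕ ↦ R ^ n * (n : ℝ) ^ s * ‖z‖ ^ n) =O[atTop] fun n : ℕ ↦ (n : ℝ) ^ s := by
    refine .of_norm_le fun n ↦ ?_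
    calc ‖R ^ n * (n : ℝ) ^ s * ‖z‖ ^ n‖ = (R * ‖z‖) ^ n * (n : ℝ) ^ s := by
          rw [norm_of_nonneg (by positivity), mul_pow]; ring
      _ ≤ (n : ℝ) ^ s :=
          mul_le_of_le_one_left (by positivity) (pow_le_one₀ (by positivity) hz)
  exact summable_of_isBigO_nat (summable_nat_rpow.2 hs) ((ha.mul hpow).trans hcancel)

section CentralBinom

lemma cast_centralBinom_eq_factorial_div {K : Type*} [DivisionRing K] [CharZero K] (n : ℕ) :
    (n.centralBinom : K) = (2 * n).factorial / (n.factorial : K) ^ 2 := by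
  rw [Nat.centralBinom_eq_two_mul_choose, Nat.cast_choose K (by lia), two_mul, Nat.add_sub_cancel,
    sq]

lemma isEquivalent_centralBinom :
    (fun n ↦ n.centralBinom : ℕ → ℝ) ~[atTop] fun n : ℕ ↦ 4 ^ n / √(π * n) := by
  have htwo : Tendsto (fun n : ℕ ↦ 2 * n) atTop atTop := tendsto_id.const_mul_atTop' two_pos
  have hstirling := Stirling.factorial_isEquivalent_stirling
  refine ((hstirling.comp_tendsto htwo).div (hstirling.pow 2)).congr_left ?_ |>.congr_right ?_
  · exact .of_eq <| funext fun n ↦ (cast_centralBinom_eq_factorial_div n).symm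
  filter_upwards [eventually_gt_atTop 0] with n hn
  have hsqrt_two_mul : √(2 * (2 * n : ℕ) * π) = 2 * √(π * n) := by
    rw [show 2 * ((2 * n : ℕ) : ℝ) * π = 2 ^ 2 * (π * n) by push_cast; ring,
      sqrt_mul (by positivity), sqrt_sq two_pos.le]
  have hpow_two_mul : ((2 * n : ℕ) / exp 1) ^ (2 * n) = 4 ^ n * ((n / exp 1) ^ n) ^ 2 := by
    rw [← pow_mul', show (4 : ℝ) = 2 ^ 2 by norm_num, ← pow_mul, ← mul_pow]
    push_cast
    ring
  have hsq : √(2 * n * π) ^ 2 = 2 * √(π * n) ^ 2 := by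
    rw [sq_sqrt (by positivity), sq_sqrt (by positivity)]; ring
  simp only [Pi.div_apply, Pi.pow_apply, Function.comp_apply]
  rw [hsqrt_two_mul, hpow_two_mul, mul_pow, hsq]
  field_simp

end CentralBinom

section Harmonic

lemma tendsto_harmonic_pred_sub_log :
    Tendsto (fun n : ℕ ↦ (harmonic (n - 1) : ℝ) - log n) atTop (𝓝 eulerMascheroniConstant) :=
  (tendsto_add_atTop_iff_nat 1).1 <| by simpa using tendsto_harmonic_sub_log_add_one

lemma tendsto_harmonic_pred_sub_harmonic_mul_pred {k : ℕ} (hk : k ≠ 0) :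
    Tendsto (fun n : ℕ ↦ (harmonic (n - 1) : ℝ) - harmonic (k * n - 1)) atTop (𝓝 (-log k)) := by
  have hmul : Tendsto (fun n : ℕ ↦ k * n) atTop atTop := tendsto_id.const_mul_atTop' (by lia)
  have h := (tendsto_harmonic_pred_sub_log.sub (tendsto_harmonic_pred_sub_log.comp hmul)).sub_const
    (log k)
  rw [sub_self, zero_sub] at h
  refine h.congr' ?_
  filter_upwards [eventually_ne_atTop 0] with n hn
  simp only [Function.comp_apply, Nat.cast_mul]
  rw [log_mul (by positivity) (by positivity)]
  ring

lemma isEquivalent_add_mul_harmonic_pred_sub (a : ℝ) {b : ℝ} (hb : b ≠ 0) {k : ℕ} (hk : 1 < k) :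
    (fun n : ℕ ↦ a + b * n * ((harmonic (n - 1) : ℝ) - harmonic (k * n - 1))) ~[atTop]
      fun n : ℕ ↦ -(b * log k) * n := by
  have hlog : log k ≠ 0 := (log_pos (by exact_mod_cast hk)).ne'
  have hdiff := (isEquivalent_const_iff_tendsto (neg_ne_zero.2 hlog)).2
    (tendsto_harmonic_pred_sub_harmonic_mul_pred (by lia : k ≠ 0))
  have hprod : (fun n : ℕ ↦ b * n * ((harmonic (n - 1) : ℝ) - harmonic (k * n - 1))) ~[atTop]
      fun n : ℕ ↦ -(b * log k) * n :=
    ((IsEquivalent.refl (u := fun n : ℕ ↦ b * n)).mul hdiff).congr_right <|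
      .of_eq <| funext fun n ↦ by simp only [Pi.mul_apply, Function.const_apply]; ring
  refine hprod.const_add_of_norm_tendsto_atTop ?_
  have hcoeff : 0 < ‖-(b * log k)‖ := norm_pos_iff.2 (neg_ne_zero.2 (mul_ne_zero hb hlog))
  simpa [Function.comp_def] using tendsto_natCast_atTop_atTop.const_mul_atTop hcoeff

end Harmonic

/-- The closed formula for the paper's coefficient `c_{n+1}`, so the index is shifted by one;
at `n = 0` it is the junk value `0`, as the division by `n ^ 3` is then by zero. -/
noncomputable def h3Coeff (n : ℕ) : ℝ :=
  6 * (-1) ^ (n + 1) * (Nat.centralBinom n : ℝ) / (n : ℝ) ^ 3 *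
    (3 + 2 * (n : ℝ) * ((harmonic (n - 1) : ℝ) - (harmonic (2 * n - 1) : ℝ)))

lemma isEquivalent_h3Coeff :
    h3Coeff ~[atTop] fun n : ℕ ↦
      (-1) ^ n * (12 * log 2 / √π * (4 ^ n * (n : ℝ) ^ (-(5 : ℝ) / 2))) := by
  have hprefactor := IsEquivalent.refl (l := atTop)
    (u := fun n : ℕ ↦ 6 * (-1) ^ (n + 1) / (n : ℝ) ^ 3)
  have hharmonic := isEquivalent_add_mul_harmonic_pred_sub 3 (two_ne_zero' ℝ) one_lt_two
  refine ((hprefactor.mul isEquivalent_centralBinom).mul hharmonic).congr_left ?_ |>.congr_right ?_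
  · exact .of_eq <| funext fun n ↦ by simp only [h3Coeff, Pi.mul_apply]; ring
  filter_upwards [eventually_gt_atTop 0] with n hn
  have hrpow : (n : ℝ) ^ (-(5 : ℝ) / 2) = √n / n ^ 3 := by
    rw [show -(5 : ℝ) / 2 = 1 / 2 - (3 : ℕ) by norm_num, rpow_sub_natCast (by positivity),
      sqrt_eq_rpow]
  simp only [Pi.mul_apply, Nat.cast_ofNat]
  rw [hrpow, sqrt_mul pi_pos.le]
  field_simp
  rw [sq_sqrt (by positivity)]
  ring

lemma isEquivalent_abs_h3Coeff :
    (fun n ↦ |h3Coeff n|) ~[atTop] fun n : ℕ ↦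
      12 * log 2 / √π * (4 ^ n * (n : ℝ) ^ (-(5 : ℝ) / 2)) := by
  refine (isEquivalent_norm_norm isEquivalent_h3Coeff).congr_right <| .of_eq <| funext fun n ↦ ?_
  rw [norm_mul, norm_pow, norm_neg, norm_one, one_pow, one_mul, norm_of_nonneg (by positivity)]

/-- With c_{n+1} := 6·(-1)^{n+1}·C(2n,n)/n³·(3 + 2n(H_{n-1} - H_{2n-1})) for n ≥ 1,
the ratio |c_{n+1}|/(4ⁿ·n^{-5/2}) tends to (12·log 2)/√π, and the power series
∑_{n=2}^∞ cₙφⁿ converges for every |φ| ≤ 1/4. -/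
theorem h3_coefficients_asymptotics
    (c : ℕ → ℝ)
    (hc : ∀ n : ℕ, 1 ≤ n →
      c (n + 1) = 6 * (-1) ^ (n + 1) * (Nat.centralBinom n : ℝ) / (n : ℝ) ^ 3 *
        (3 + 2 * (n : ℝ) * ((harmonic (n - 1) : ℝ) - (harmonic (2 * n - 1) : ℝ)))) :
    Tendsto (fun n : ℕ => |c (n + 1)| / ((4 : ℝ) ^ n * (n : ℝ) ^ (-(5 : ℝ) / 2)))
        atTop (nhds (12 * Real.log 2 / Real.sqrt Real.pi)) ∧
    ∀ φ : ℂ, ‖φ‖ ≤ 1 / 4 →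
      Summable (fun n : ℕ => (c (n + 2) : ℂ) * φ ^ (n + 2)) := by
  have habs : (fun n ↦ |c (n + 1)|) ~[atTop] fun n : ℕ ↦
      12 * log 2 / √π * (4 ^ n * (n : ℝ) ^ (-(5 : ℝ) / 2)) := by
    refine isEquivalent_abs_h3Coeff.congr_left ?_
    filter_upwards [eventually_ge_atTop 1] with n hn
    rw [hc n hn, h3Coeff]
  refine ⟨tendsto_div_of_isEquivalent_const_mul habs ?_, fun φ hφ ↦ ?_⟩
  · filter_upwards [eventually_gt_atTop 0] with n hn
    positivity
  have hgrowth : (fun n ↦ (c (n + 1) : ℂ)) =O[atTop] fun n : ℕ ↦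
      4 ^ n * (n : ℝ) ^ (-(5 : ℝ) / 2) :=
    .of_norm_left <| by
      simpa only [Complex.norm_real, norm_eq_abs] using
        habs.isBigO.trans (isBigO_const_mul_self _ _ _)
  have hsum : Summable fun n ↦ (c (n + 1) : ℂ) * φ ^ n :=
    summable_mul_pow_of_isBigO four_pos.le (by linarith) (by norm_num) hgrowth
  refine (summable_nat_add_iff (f := fun n ↦ (c (n + 1) : ℂ) * φ ^ (n + 1)) 1).2 ?_
  simpa only [pow_succ, mul_assoc] using hsum.mul_right φ
end

section
/- Let π₀(λ) = ∑_{n=0}^∞ 16^{-n} · C(2n,n)² · λⁿ for complex λ with |λ| < 1. Then π₀ satisfies the Picard–Fuchs equation of the Legendre family of elliptic curves: λ(λ-1)·π₀''(λ) + (2λ-1)·π₀'(λ) + (1/4)·π₀(λ) = 0 for all λ with |λ| < 1. -/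
/-- The period π₀(λ) = ∑_{n=0}^∞ 16^{-n}·C(2n,n)²·λⁿ of the Legendre family. -/
noncomputable def legendrePeriod : ℂ → ℂ := fun lam =>
  ∑' n : ℕ, ((16 : ℂ) ^ n)⁻¹ * (Nat.centralBinom n : ℂ) ^ 2 * lam ^ n

/-!
`π₀` is the Gauss hypergeometric function `₂F₁ (1/2) (1/2) 1`, and the Picard–Fuchs equation is the
corresponding case of Gauss's hypergeometric equation. If `f = ∑ uₙ zⁿ`, then
`z f'' + c f' = ∑ (n + 1) (c + n) uₙ₊₁ zⁿ` and
`z² f'' + (a + b + 1) z f' + a b f = ∑ (a + n) (b + n) uₙ zⁿ`; the coefficient recurrence of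
`₂F₁ a b c` equates the two right-hand sides term by term.
-/

open FormalMultilinearSeries
open scoped ENNReal Nat

section PowerSeries

theorem hasSum_mul_pow_of_hasSum_succ {R : Type*} [CommRing R] [TopologicalSpace R]
    [IsTopologicalRing R] {v : ℕ → R} {z s : R} (hv : v 0 = 0)
    (h : HasSum (fun n ↦ v (n + 1) * z ^ n) s) : HasSum (fun n ↦ v n * z ^ n) (z * s) := by
  rw [← hasSum_nat_add_iff' 1]
  simpa only [Finset.sum_range_one, hv, zero_mul, sub_zero, pow_succ', mul_left_comm z]
    using h.mul_left z

variable {𝕜 : Type*} [NontriviallyNormedField 𝕜] {f : 𝕜 → 𝕜} {u : ℕ → 𝕜} {x z : 𝕜} {r : ℝ≥0∞}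

theorem hasSum_of_hasFPowerSeriesOnBall_ofScalars
    (hf : HasFPowerSeriesOnBall f (ofScalars 𝕜 u) 0 r) (hz : z ∈ Metric.eball 0 r) :
    HasSum (fun n ↦ u n * z ^ n) (f z) := by
  simpa only [ofScalars_apply_eq, smul_eq_mul, zero_add] using hf.hasSum hz

variable [CompleteSpace 𝕜]

theorem hasFPowerSeriesOnBall_deriv_ofScalars
    (hf : HasFPowerSeriesOnBall f (ofScalars 𝕜 u) x r) :
    HasFPowerSeriesOnBall (deriv f) (ofScalars 𝕜 fun n ↦ (n + 1) * u (n + 1)) x r := by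
  have hseries : ofScalars 𝕜 (fun n ↦ (n + 1) * u (n + 1)) =
      (ContinuousLinearMap.apply 𝕜 𝕜 (1 : 𝕜)).compFormalMultilinearSeries
        (ofScalars 𝕜 u).derivSeries := by
    ext n
    have h : (ofScalars 𝕜 u).derivSeries.coeff n 1 = (n + 1) * u (n + 1) := by simp
    rw [ofScalars_apply_eq, one_pow, smul_eq_mul, mul_one]
    exact h.symm
  rw [hseries]
  exact (ContinuousLinearMap.apply 𝕜 𝕜 (1 : 𝕜)).comp_hasFPowerSeriesOnBall hf.fderiv

theorem hasSum_mul_deriv_deriv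
    (hf : HasFPowerSeriesOnBall f (ofScalars 𝕜 u) 0 r) (hz : z ∈ Metric.eball 0 r) :
    HasSum (fun n : ℕ ↦ n * ((n + 1) * u (n + 1)) * z ^ n) (z * deriv (deriv f) z) := by
  refine hasSum_mul_pow_of_hasSum_succ (by simp) ?_
  simpa using hasSum_of_hasFPowerSeriesOnBall_ofScalars
    (hasFPowerSeriesOnBall_deriv_ofScalars (hasFPowerSeriesOnBall_deriv_ofScalars hf)) hz

theorem hasSum_mul_deriv_deriv_add_mul_deriv (c : 𝕜)
    (hf : HasFPowerSeriesOnBall f (ofScalars 𝕜 u) 0 r) (hz : z ∈ Metric.eball 0 r) :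
    HasSum (fun n : ℕ ↦ (n + 1) * (c + n) * u (n + 1) * z ^ n)
      (z * deriv (deriv f) z + c * deriv f z) := by
  have hf' := hasSum_of_hasFPowerSeriesOnBall_ofScalars
    (hasFPowerSeriesOnBall_deriv_ofScalars hf) hz
  convert (hasSum_mul_deriv_deriv hf hz).add (hf'.mul_left c) using 2 with n
  ring

theorem hasSum_sq_mul_deriv_deriv_add_mul_deriv_add (a b : 𝕜)
    (hf : HasFPowerSeriesOnBall f (ofScalars 𝕜 u) 0 r) (hz : z ∈ Metric.eball 0 r) :
    HasSum (fun n : ℕ ↦ (a + n) * (b + n) * u n * z ^ n)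
      (z ^ 2 * deriv (deriv f) z + (a + b + 1) * z * deriv f z + a * b * f z) := by
  have hf₀ := hasSum_of_hasFPowerSeriesOnBall_ofScalars hf hz
  have hf₁ : HasSum (fun n : ℕ ↦ n * u n * z ^ n) (z * deriv f z) :=
    hasSum_mul_pow_of_hasSum_succ (by simp) <| by
      simpa using hasSum_of_hasFPowerSeriesOnBall_ofScalars
        (hasFPowerSeriesOnBall_deriv_ofScalars hf) hz
  have hf₂ : HasSum (fun n : ℕ ↦ (n - 1) * (n * u n) * z ^ n) (z * (z * deriv (deriv f) z)) :=
    hasSum_mul_pow_of_hasSum_succ (by simp) <| by simpa using hasSum_mul_deriv_deriv hf hz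
  convert (hf₂.add (hf₁.mul_left (a + b + 1))).add (hf₀.mul_left (a * b)) using 1
  · funext n
    ring
  · ring

theorem gauss_hypergeometric_equation_of_recurrence {a b c : 𝕜}
    (hf : HasFPowerSeriesOnBall f (ofScalars 𝕜 u) 0 r)
    (hu : ∀ n : ℕ, (n + 1) * (c + n) * u (n + 1) = (a + n) * (b + n) * u n)
    (hz : z ∈ Metric.eball 0 r) :
    z * (1 - z) * deriv (deriv f) z + (c - (a + b + 1) * z) * deriv f z - a * b * f z = 0 := by
  have h := hasSum_mul_deriv_deriv_add_mul_deriv c hf hz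
  simp only [hu] at h
  linear_combination h.unique (hasSum_sq_mul_deriv_deriv_add_mul_deriv_add a b hf hz)

end PowerSeries

section Hypergeometric

theorem ordinaryHypergeometricCoefficient_succ {K : Type*} [Field K] [CharZero K] (a b : K)
    {c : K} {n : ℕ} (hc : c + n ≠ 0) :
    (n + 1) * (c + n) * ordinaryHypergeometricCoefficient a b c (n + 1) =
      (a + n) * (b + n) * ordinaryHypergeometricCoefficient a b c n := by
  simp only [ordinaryHypergeometricCoefficient, ascPochhammer_succ_eval, Nat.factorial_succ,
    Nat.cast_mul, Nat.cast_succ, mul_inv]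
  have hn : (n + 1 : K) ≠ 0 := n.cast_add_one_ne_zero
  field

variable {𝕜 : Type*} [RCLike 𝕜]

theorem one_le_ordinaryHypergeometricSeries_radius (a b c : 𝕜) :
    1 ≤ (ordinaryHypergeometricSeries 𝕜 a b c).radius := by
  by_cases h : ∃ k : ℕ, (k : 𝕜) = -a ∨ (k : 𝕜) = -b ∨ (k : 𝕜) = -c
  · obtain ⟨k, hk⟩ := h
    rw [radius_eq_top_of_forall_image_add_eq_zero _ (k + 1) fun n ↦
      ordinaryHypergeometricSeries_eq_zero_of_neg_nat a b c hk (by lia)]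
    exact le_top
  · push Not at h
    exact (ordinaryHypergeometricSeries_radius_eq_one 𝕜 a b c h).ge

theorem hasFPowerSeriesOnBall_ordinaryHypergeometric (a b c : 𝕜) :
    HasFPowerSeriesOnBall (₂F₁ a b c) (ordinaryHypergeometricSeries 𝕜 a b c) 0 1 :=
  have h := one_le_ordinaryHypergeometricSeries_radius a b c
  ((ordinaryHypergeometricSeries 𝕜 a b c).hasFPowerSeriesOnBall (one_pos.trans_le h)).mono one_pos h

theorem ordinaryHypergeometric_gauss_equation (a b : 𝕜) {c z : 𝕜} (hc : ∀ n : ℕ, c + n ≠ 0)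
    (hz : ‖z‖ < 1) :
    z * (1 - z) * deriv (deriv (₂F₁ a b c)) z
      + (c - (a + b + 1) * z) * deriv (₂F₁ a b c) z - a * b * ₂F₁ a b c z = 0 :=
  gauss_hypergeometric_equation_of_recurrence (hasFPowerSeriesOnBall_ordinaryHypergeometric a b c)
    (fun n ↦ ordinaryHypergeometricCoefficient_succ a b (hc n))
    (by simpa [enorm_eq_nnnorm, ← NNReal.coe_lt_one] using hz)

end Hypergeometric

section CentralBinom

variable {K : Type*} [Field K] [CharZero K]

theorem ascPochhammer_eval_one_half (n : ℕ) :
    (ascPochhammer K n).eval (1 / 2) = n ! * n.centralBinom / 4 ^ n := by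
  induction n with
  | zero => simp
  | succ n ih =>
    have h : ((n : K) + 1) * (n + 1).centralBinom = 2 * (2 * n + 1) * n.centralBinom :=
      mod_cast n.succ_mul_centralBinom_succ
    rw [ascPochhammer_succ_eval, ih, Nat.factorial_succ, Nat.cast_mul, Nat.cast_succ, pow_succ]
    linear_combination -(n ! : K) / (4 ^ n * 4) * h

theorem ordinaryHypergeometricCoefficient_one_half_one_half_one (n : ℕ) :
    ordinaryHypergeometricCoefficient (1 / 2 : K) (1 / 2) 1 n =
      ((16 : K) ^ n)⁻¹ * (n.centralBinom : K) ^ 2 := by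
  have hn : (n ! : K) ≠ 0 := mod_cast n.factorial_ne_zero
  rw [ordinaryHypergeometricCoefficient, ascPochhammer_eval_one_half, ascPochhammer_eval_one,
    show (16 : K) = 4 * 4 by norm_num, mul_pow]
  field

end CentralBinom

theorem legendrePeriod_eq_ordinaryHypergeometric : legendrePeriod = ₂F₁ (1 / 2 : ℂ) (1 / 2) 1 := by
  rw [ordinaryHypergeometric_eq_tsum]
  funext z
  refine tsum_congr fun n ↦ ?_
  rw [← ordinaryHypergeometricCoefficient_one_half_one_half_one, smul_eq_mul]

/-- π₀ satisfies the Picard-Fuchs equation of the Legendre family of elliptic curves: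
λ(λ-1)·π₀'' + (2λ-1)·π₀' + (1/4)·π₀ = 0 on the open unit disc. -/
theorem legendrePeriod_satisfies_picard_fuchs :
    ∀ lam : ℂ, ‖lam‖ < 1 →
      lam * (lam - 1) * deriv (deriv legendrePeriod) lam
        + (2 * lam - 1) * deriv legendrePeriod lam
        + (1 / 4) * legendrePeriod lam = 0 := by
  intro lam hlam
  have hc : ∀ n : ℕ, (1 : ℂ) + n ≠ 0 := fun n ↦ by norm_cast; lia
  rw [legendrePeriod_eq_ordinaryHypergeometric]
  linear_combination -ordinaryHypergeometric_gauss_equation (1 / 2) (1 / 2) hc hlam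
end

section
/- ∑_{n=1}^∞ C(2n,n) / (4ⁿ · n) = 2·log 2. -/
/-!
By Wallis' formula, `C(2n,n) / 4ⁿ` is the average of `cos t ^ (2n)` over `[0, π/2]`. Averaging the
expansion `∑ cos t ^ (2n) / n = -log (1 - cos² t) = -2 log (sin t)`, whose terms are nonnegative,
thus turns the series into the average of `-2 log (sin t)`, which Euler's integral evaluates.
-/

open MeasureTheory Real
open scoped Interval

theorem hasSum_intervalIntegral_of_nonneg {ι : Type*} [Countable ι] {μ : Measure ℝ} {a b : ℝ}
    {F : ι → ℝ → ℝ} {f : ℝ → ℝ}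
    (hF_meas : ∀ i, AEStronglyMeasurable (F i) (μ.restrict (Ι a b)))
    (hF_nonneg : ∀ i, ∀ᵐ t ∂μ, t ∈ Ι a b → 0 ≤ F i t)
    (hf : IntervalIntegrable f μ a b)
    (hF_sum : ∀ᵐ t ∂μ, t ∈ Ι a b → HasSum (F · t) (f t)) :
    HasSum (fun i ↦ ∫ t in a..b, F i t ∂μ) (∫ t in a..b, f t ∂μ) := by
  have hF_norm (i : ι) : ∀ᵐ t ∂μ, t ∈ Ι a b → ‖F i t‖ ≤ F i t :=
    (hF_nonneg i).mono fun t ht hmem ↦ (norm_of_nonneg (ht hmem)).le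
  have hF_summable : ∀ᵐ t ∂μ, t ∈ Ι a b → Summable (F · t) :=
    hF_sum.mono fun t ht hmem ↦ (ht hmem).summable
  have hF_tsum : f =ᵐ[μ.restrict (Ι a b)] fun t ↦ ∑' i, F i t :=
    (ae_restrict_iff' measurableSet_uIoc).2 <|
      hF_sum.mono fun t ht hmem ↦ (ht hmem).tsum_eq.symm
  exact intervalIntegral.hasSum_integral_of_dominated_convergence F hF_meas hF_norm hF_summable
    (hf.congr_ae hF_tsum) hF_sum

theorem prod_odd_div_even_eq_centralBinom_div {K : Type*} [Field K] [CharZero K] (n : ℕ) :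
    ∏ i ∈ Finset.range n, (2 * (i : K) + 1) / (2 * i + 2) = (n.centralBinom : K) / 4 ^ n := by
  induction n with
  | zero => simp
  | succ n ih =>
    have hn : (n : K) + 1 ≠ 0 := n.cast_add_one_ne_zero
    have hrec : ((n : K) + 1) * (n + 1).centralBinom = 2 * (2 * n + 1) * n.centralBinom :=
      mod_cast n.succ_mul_centralBinom_succ
    calc ∏ i ∈ Finset.range (n + 1), (2 * (i : K) + 1) / (2 * i + 2)
        = n.centralBinom / 4 ^ n * ((2 * n + 1) / (2 * n + 2)) := by
          rw [Finset.prod_range_succ, ih]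
      _ = 2 * (2 * n + 1) * n.centralBinom / (4 ^ (n + 1) * (n + 1)) := by
          rw [show (2 * n + 2 : K) = 2 * (n + 1) by ring]
          field_simp
          ring
      _ = (n + 1).centralBinom / 4 ^ (n + 1) := by
          rw [← hrec, mul_comm, mul_div_mul_right _ _ hn]

theorem integral_cos_pow_two_mul_zero_pi_div_two (n : ℕ) :
    ∫ t in 0..π / 2, cos t ^ (2 * n) = π / 2 * (n.centralBinom / 4 ^ n) := by
  rw [EulerSine.integral_cos_pow_eq, integral_sin_pow_even, prod_odd_div_even_eq_centralBinom_div]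
  ring

-- Where `sin t < 0`, the junk value `log (sin t) = log |sin t|` is the intended one.
theorem hasSum_cos_pow_two_mul_div_log_sin {t : ℝ} (ht : sin t ≠ 0) :
    HasSum (fun n : ℕ ↦ cos t ^ (2 * (n + 1)) / ((n : ℝ) + 1)) (-2 * log (sin t)) := by
  have hcos : |cos t ^ 2| < 1 := by
    rw [abs_of_nonneg (sq_nonneg _), cos_sq']
    exact sub_lt_self 1 (sq_pos_of_ne_zero ht)
  have hlog : -log (1 - cos t ^ 2) = -2 * log (sin t) := by
    rw [← sin_sq, log_pow]
    push_cast
    ring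
  simpa only [hlog, ← pow_mul] using hasSum_pow_div_log_of_abs_lt_one hcos

theorem ae_sin_ne_zero : ∀ᵐ t : ℝ, sin t ≠ 0 := by
  have hzeros : (Set.range fun n : ℤ ↦ (n : ℝ) * π).Countable := Set.countable_range _
  exact (hzeros.ae_notMem volume).mono fun t ht hsin ↦ ht (sin_eq_zero_iff.1 hsin)

theorem hasSum_integral_cos_pow_two_mul_div_log_sin (a b : ℝ) :
    HasSum (fun n : ℕ ↦ ∫ t in a..b, cos t ^ (2 * (n + 1)) / ((n : ℝ) + 1))
      (∫ t in a..b, -2 * log (sin t)) := by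
  refine hasSum_intervalIntegral_of_nonneg
    (fun n ↦ Continuous.aestronglyMeasurable (by fun_prop))
    (fun n ↦ .of_forall fun t _ ↦ ?_)
    (intervalIntegrable_log_sin.const_mul (-2))
    (ae_sin_ne_zero.mono fun t ht _ ↦ hasSum_cos_pow_two_mul_div_log_sin ht)
  exact div_nonneg ((even_two_mul (n + 1)).pow_nonneg _) n.cast_add_one_pos.le

theorem hasSum_centralBinom_succ_div :
    HasSum (fun n : ℕ ↦ ((n + 1).centralBinom : ℝ) / (4 ^ (n + 1) * ((n : ℝ) + 1)))
      (2 * log 2) := by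
  have hterm (n : ℕ) : 2 / π * ∫ t in 0..π / 2, cos t ^ (2 * (n + 1)) / ((n : ℝ) + 1) =
      (n + 1).centralBinom / (4 ^ (n + 1) * ((n : ℝ) + 1)) := by
    rw [intervalIntegral.integral_div, integral_cos_pow_two_mul_zero_pi_div_two]
    field_simp
  have hsum : 2 / π * ∫ t in 0..π / 2, -2 * log (sin t) = 2 * log 2 := by
    rw [intervalIntegral.integral_const_mul, integral_log_sin_zero_pi_div_two]
    field_simp
  simpa only [hterm, hsum] using
    (hasSum_integral_cos_pow_two_mul_div_log_sin 0 (π / 2)).mul_left (2 / π)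

/-- ∑_{n=1}^∞ C(2n,n)/(4ⁿ·n) = 2·log 2. -/
theorem centralBinom_inv_n_sum :
    ∑' n : ℕ, (Nat.centralBinom (n + 1) : ℝ) / ((4 : ℝ) ^ (n + 1) * ((n : ℝ) + 1)) =
      2 * Real.log 2 :=
  hasSum_centralBinom_succ_div.tsum_eq
end

section
/- ∑_{n=1}^∞ C(2n,n) / (4ⁿ · n²) = π²/6 - 2·log²2. -/
/-!
With `S k x = ∑_{n ≥ 1} (2n choose n) x ^ n / n ^ k` one has `x * S (k + 1)' = S k`, and the
substitution `x = z * (1 - z)` rationalises the generating function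
`1 + S 0 x = 1 / √(1 - 4 * x) = 1 / (1 - 2 * z)`. Integrating twice from `z = 0` gives
`S 1 x = -2 * log (1 - z)` and `S 2 x = 2 * Li₂ z - log (1 - z) ^ 2`. The series of the theorem is
the value at `x = 1 / 4`, that is `z = 1 / 2`, where Euler's reflection formula evaluates `Li₂`.
-/

open Metric Set

theorem eqOn_of_hasDerivAt_interior_eq {D : Set ℝ} {f g f' : ℝ → ℝ} {x₀ : ℝ}
    (hD : Convex ℝ D) (hx₀ : x₀ ∈ D) (hf : ContinuousOn f D) (hg : ContinuousOn g D)
    (hf' : ∀ x ∈ interior D, HasDerivAt f (f' x) x)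
    (hg' : ∀ x ∈ interior D, HasDerivAt g (f' x) x) (h₀ : f x₀ = g x₀) : EqOn f g D := by
  have hsub : ContinuousOn (f - g) D := hf.sub hg
  have hderiv : ∀ x ∈ interior D, HasDerivWithinAt (f - g) 0 (interior D) x := fun x hx ↦ by
    simpa using ((hf' x hx).sub (hg' x hx)).hasDerivWithinAt
  have hmono : MonotoneOn (f - g) D :=
    monotoneOn_of_hasDerivWithinAt_nonneg hD hsub hderiv fun _ _ ↦ le_rfl
  have hanti : AntitoneOn (f - g) D :=
    antitoneOn_of_hasDerivWithinAt_nonpos hD hsub hderiv fun _ _ ↦ le_rfl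
  intro x hx
  have hconst : (f - g) x = (f - g) x₀ := by
    rcases le_total x x₀ with h | h
    · exact le_antisymm (hmono hx hx₀ h) (hanti hx hx₀ h)
    · exact le_antisymm (hanti hx₀ hx h) (hmono hx₀ hx h)
  simp only [Pi.sub_apply] at hconst
  linarith

theorem summable_norm_mul_pow_of_norm_mul_pow_le {E : Type*} [SeminormedAddCommGroup E]
    {a : ℕ → E} {C R r : ℝ} (ha : ∀ n, ‖a n‖ * R ^ n ≤ C) (hr : 0 ≤ r) (hrR : r < R) :
    Summable fun n ↦ ‖a n‖ * r ^ n := by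
  have hR : 0 < R := hr.trans_lt hrR
  have hgeom : Summable fun n ↦ C * (r / R) ^ n :=
    (summable_geometric_of_lt_one (by positivity) ((div_lt_one hR).2 hrR)).mul_left C
  refine hgeom.of_nonneg_of_le (fun n ↦ by positivity) fun n ↦ ?_
  calc ‖a n‖ * r ^ n = ‖a n‖ * R ^ n * (r / R) ^ n := by
        rw [mul_assoc, ← mul_pow, mul_div_cancel₀ r hR.ne']
    _ ≤ C * (r / R) ^ n := by gcongr; exact ha n

section PolylogSeries

variable {𝕜 : Type*} [RCLike 𝕜]

/-- The polylogarithm-type series `∑_{n ≥ 1} a n * x ^ n / n ^ k`, indexed from `n = 0` by a shift.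
The coefficient `a 0` is ignored, and `a = 1` gives the classical polylogarithm `Li_k`. -/
noncomputable def polylogSeries (a : ℕ → 𝕜) (k : ℕ) (x : 𝕜) : 𝕜 :=
  ∑' n : ℕ, a (n + 1) * x ^ (n + 1) / ((n : 𝕜) + 1) ^ k

@[simp]
theorem polylogSeries_zero (a : ℕ → 𝕜) (k : ℕ) : polylogSeries a k 0 = 0 := by
  simp [polylogSeries]

variable {a : ℕ → 𝕜} {k : ℕ} {x : 𝕜} {C R : ℝ}

theorem norm_natCast_add_one (n : ℕ) : ‖(n : 𝕜) + 1‖ = n + 1 := by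
  exact_mod_cast RCLike.norm_natCast (K := 𝕜) (n + 1)

theorem hasDerivAt_polylogSeries_succ (ha : ∀ n, ‖a n‖ * R ^ n ≤ C) (hx : ‖x‖ < R) :
    HasDerivAt (polylogSeries a (k + 1)) (∑' n : ℕ, a (n + 1) * x ^ n / ((n : 𝕜) + 1) ^ k) x := by
  obtain ⟨r, hxr, hrR⟩ := exists_between hx
  have hr : 0 < r := (norm_nonneg x).trans_lt hxr
  have hbound : Summable fun n ↦ ‖a (n + 1)‖ * r ^ n := by
    have h := (summable_nat_add_iff 1).2 (summable_norm_mul_pow_of_norm_mul_pow_le ha hr.le hrR)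
    simpa [pow_succ, ← mul_assoc, hr.ne'] using h.mul_right r⁻¹
  refine hasDerivAt_tsum_of_isPreconnected (t := ball (0 : 𝕜) r) (y₀ := 0)
    (g' := fun n y ↦ a (n + 1) * y ^ n / ((n : 𝕜) + 1) ^ k) hbound isOpen_ball
    (isConnected_ball hr).isPreconnected (fun n y _ ↦ ?_) (fun n y hy ↦ ?_) (mem_ball_self hr)
    (by simp) (by simpa using hxr)
  · have hn : (n : 𝕜) + 1 ≠ 0 := n.cast_add_one_ne_zero
    refine (((hasDerivAt_pow (n + 1) y).const_mul (a (n + 1))).div_const _).congr_deriv ?_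
    push_cast [Nat.add_sub_cancel]
    field_simp
    ring
  · have hk : 1 ≤ ((n : ℝ) + 1) ^ k := one_le_pow₀ (by simp)
    rw [norm_div, norm_mul, norm_pow, norm_pow, norm_natCast_add_one]
    refine (div_le_self (by positivity) hk).trans ?_
    gcongr
    exact (mem_ball_zero_iff.1 hy).le

theorem hasDerivAt_polylogSeries_succ_of_ne_zero (ha : ∀ n, ‖a n‖ * R ^ n ≤ C) (hx : ‖x‖ < R)
    (hx₀ : x ≠ 0) : HasDerivAt (polylogSeries a (k + 1)) (polylogSeries a k x / x) x := by
  refine (hasDerivAt_polylogSeries_succ ha hx).congr_deriv ?_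
  rw [polylogSeries, ← tsum_div_const]
  exact tsum_congr fun n ↦ by field_simp; ring

theorem continuousOn_polylogSeries (ha : ∀ n, ‖a n‖ * R ^ n ≤ C) (hk : 1 < k) :
    ContinuousOn (polylogSeries a k) (closedBall 0 R) := by
  have hbound : Summable fun n : ℕ ↦ C / ((n : ℝ) + 1) ^ k := by
    simpa using (summable_pow_div_add C k 1 hk).of_norm
  refine continuousOn_tsum (fun n ↦ by fun_prop) hbound fun n x hx ↦ ?_
  rw [norm_div, norm_mul, norm_pow, norm_pow, norm_natCast_add_one]
  gcongr
  calc ‖a (n + 1)‖ * ‖x‖ ^ (n + 1) ≤ ‖a (n + 1)‖ * R ^ (n + 1) := by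
        gcongr
        exact mem_closedBall_zero_iff.1 hx
    _ ≤ C := ha (n + 1)

end PolylogSeries

section Dilogarithm

/-- The dilogarithm `Li₂`, defined by its power series on `[-1, 1]`; outside this interval the
series diverges and the value is the junk value `0`. -/
noncomputable def dilog : ℝ → ℝ := polylogSeries 1 2

theorem dilog_zero : dilog 0 = 0 := polylogSeries_zero 1 2

theorem dilog_one : dilog 1 = Real.pi ^ 2 / 6 := by
  rw [← hasSum_zeta_two.tsum_eq, hasSum_zeta_two.summable.tsum_eq_zero_add]
  simp [dilog, polylogSeries]

theorem continuousOn_dilog : ContinuousOn dilog (Icc (-1) 1) := by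
  simpa [dilog, Real.closedBall_eq_Icc] using
    continuousOn_polylogSeries (a := (1 : ℕ → ℝ)) (R := 1) (C := 1) (by simp) one_lt_two

theorem polylogSeries_one_one {x : ℝ} (hx : |x| < 1) :
    polylogSeries 1 1 x = -Real.log (1 - x) := by
  simpa [polylogSeries] using (Real.hasSum_pow_div_log_of_abs_lt_one hx).tsum_eq

theorem hasDerivAt_dilog {x : ℝ} (hx : |x| < 1) (hx₀ : x ≠ 0) :
    HasDerivAt dilog (-Real.log (1 - x) / x) x := by
  rw [← polylogSeries_one_one hx]
  exact hasDerivAt_polylogSeries_succ_of_ne_zero (R := 1) (C := 1) (by simp) hx hx₀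

theorem hasDerivAt_log_one_sub {x : ℝ} (hx : x ≠ 1) :
    HasDerivAt (fun y ↦ Real.log (1 - y)) (-1 / (1 - x)) x :=
  ((hasDerivAt_id' x).const_sub 1).log (sub_ne_zero.2 hx.symm)

theorem continuous_log_mul_log_one_sub :
    Continuous fun x : ℝ ↦ Real.log x * Real.log (1 - x) := by
  have continuousAt_of_ne_one : ∀ x : ℝ, x ≠ 1 →
      ContinuousAt (fun x ↦ Real.log x * Real.log (1 - x)) x := by
    intro x hx
    have hlog := (hasDerivAt_log_one_sub hx).differentiableAt
    rcases eq_or_ne x 0 with rfl | hx₀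
    · -- The zero of `log (1 - x)` at `0` absorbs the singularity of `log x`.
      have hfactor : (fun x : ℝ ↦ Real.log x * Real.log (1 - x)) =
          fun x ↦ x * Real.log x * dslope (fun y ↦ Real.log (1 - y)) 0 x := by
        ext x
        have h := sub_smul_dslope (fun y : ℝ ↦ Real.log (1 - y)) 0 x
        simp only [sub_zero, Real.log_one, smul_eq_mul] at h
        rw [← h]
        ring
      rw [hfactor]
      exact Real.continuous_mul_log.continuousAt.mul (continuousAt_dslope_same.2 hlog)
    · exact (Real.continuousAt_log hx₀).mul hlog.continuousAt
  refine continuous_iff_continuousAt.2 fun x ↦ ?_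
  rcases eq_or_ne x 1 with rfl | hx
  · have h := (continuousAt_of_ne_one (1 - 1) (by simp)).comp (f := fun x ↦ 1 - x) (by fun_prop)
    simpa [Function.comp_def, mul_comm] using h
  · exact continuousAt_of_ne_one x hx

/-- Euler's reflection formula. At the endpoints it relies on the junk value `log 0 = 0`. -/
theorem dilog_add_dilog_one_sub {x : ℝ} (hx : x ∈ Icc 0 1) :
    dilog x + dilog (1 - x) = Real.pi ^ 2 / 6 - Real.log x * Real.log (1 - x) := by
  have hdilog : ContinuousOn dilog (Icc 0 1) :=
    continuousOn_dilog.mono (Icc_subset_Icc_left (by norm_num))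
  refine eqOn_of_hasDerivAt_interior_eq (x₀ := 0)
    (f := fun y ↦ dilog y + dilog (1 - y))
    (g := fun y ↦ Real.pi ^ 2 / 6 - Real.log y * Real.log (1 - y))
    (f' := fun y ↦ -Real.log (1 - y) / y + Real.log y / (1 - y))
    (convex_Icc 0 1) (by simp) ?_ ?_ ?_ ?_ ?_ hx
  · exact hdilog.add (hdilog.comp (by fun_prop) fun y hy ↦ ⟨by linarith [hy.2], by linarith [hy.1]⟩)
  · exact (continuous_const.sub continuous_log_mul_log_one_sub).continuousOn
  · rw [interior_Icc]
    rintro y ⟨hy₀, hy₁⟩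
    have hleft := hasDerivAt_dilog (abs_lt.2 ⟨by linarith, hy₁⟩) hy₀.ne'
    have hright := hasDerivAt_dilog (x := 1 - y) (abs_lt.2 ⟨by linarith, by linarith⟩)
      (by linarith)
    refine (hleft.add (hright.comp y ((hasDerivAt_id' y).const_sub 1))).congr_deriv ?_
    rw [sub_sub_cancel]
    ring
  · rw [interior_Icc]
    rintro y ⟨hy₀, hy₁⟩
    refine (((Real.hasDerivAt_log hy₀.ne').mul (hasDerivAt_log_one_sub hy₁.ne)).const_sub
      (Real.pi ^ 2 / 6)).congr_deriv ?_
    ring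
  · simp [dilog_zero, dilog_one]

theorem dilog_one_half : dilog (1 / 2) = Real.pi ^ 2 / 12 - Real.log 2 ^ 2 / 2 := by
  have h := dilog_add_dilog_one_sub (x := 1 / 2) (by norm_num)
  rw [sub_half, one_div, Real.log_inv] at h
  rw [one_div]
  linarith

end Dilogarithm

section CentralBinom

theorem multichoose_one_half {K : Type*} [Field K] [CharZero K] (n : ℕ) :
    Ring.multichoose (1 / 2 : K) n = n.centralBinom / 4 ^ n := by
  have hasc : (ascPochhammer K n).eval (1 / 2) = n.factorial * (n.centralBinom / 4 ^ n) := by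
    induction n with
    | zero => simp
    | succ n ih =>
      have hrec : ((n : K) + 1) * (n + 1).centralBinom = 2 * (2 * n + 1) * n.centralBinom :=
        mod_cast n.succ_mul_centralBinom_succ
      rw [ascPochhammer_succ_eval, ih, Nat.factorial_succ]
      have hpow : (4 : K) ^ n ≠ 0 := pow_ne_zero n (by norm_num)
      push_cast
      rw [pow_succ]
      field_simp
      linear_combination -2 * n.factorial * hrec
  have h := Ring.factorial_nsmul_multichoose_eq_ascPochhammer (1 / 2 : K) n
  rw [Polynomial.ascPochhammer_smeval_eq_eval, hasc, nsmul_eq_mul] at h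
  exact mul_left_cancel₀ (Nat.cast_ne_zero.2 n.factorial_ne_zero) h

theorem hasSum_centralBinom_mul_pow {x : ℝ} (hx : |x| < 1 / 4) :
    HasSum (fun n ↦ n.centralBinom * x ^ n) (1 / √(1 - 4 * x)) := by
  have hmem : 4 * x ∈ eball (0 : ℝ) 1 := by
    rw [← ENNReal.ofReal_one, eball_ofReal, mem_ball_zero_iff, norm_mul, Real.norm_ofNat,
      Real.norm_eq_abs]
    linarith
  have h := (Real.one_div_one_sub_rpow_hasFPowerSeriesOnBall_zero (1 / 2)).hasSum hmem
  simp only [FormalMultilinearSeries.ofScalars_apply_eq, ← Ring.multichoose_eq,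
    multichoose_one_half, zero_add, ← Real.sqrt_eq_rpow, smul_eq_mul, mul_pow] at h
  refine h.congr_fun fun n ↦ ?_
  field_simp

theorem norm_centralBinom_mul_pow_le (n : ℕ) : ‖(n.centralBinom : ℝ)‖ * (1 / 4) ^ n ≤ 1 := by
  rw [Real.norm_natCast, one_div, inv_pow, ← div_eq_mul_inv, div_le_one (by positivity)]
  exact_mod_cast n.centralBinom_le_four_pow

/-- The polylogarithm series `∑_{n ≥ 1} (2n choose n) * x ^ n / n ^ k` with central binomial
coefficients, absolutely convergent for `|x| < 1 / 4`, and also at `|x| = 1 / 4` when `1 < k`. -/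
noncomputable def centralBinomPolylog (k : ℕ) : ℝ → ℝ :=
  polylogSeries (fun n ↦ (n.centralBinom : ℝ)) k

variable {z : ℝ}

theorem abs_mul_one_sub_lt (hz : z ∈ Ico 0 (1 / 2)) : |z * (1 - z)| < 1 / 4 := by
  obtain ⟨hz₀, hz₁⟩ := hz
  rw [abs_of_nonneg (by nlinarith)]
  nlinarith [mul_pos (sub_pos.2 hz₁) (sub_pos.2 hz₁)]

theorem hasDerivAt_mul_one_sub (z : ℝ) : HasDerivAt (fun y ↦ y * (1 - y)) (1 - 2 * z) z :=
  ((hasDerivAt_id' z).mul ((hasDerivAt_id' z).const_sub 1)).congr_deriv (by ring)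

theorem hasDerivAt_centralBinomPolylog_succ_mul_one_sub (k : ℕ) (hz : z ∈ Ioo 0 (1 / 2)) :
    HasDerivAt (fun y ↦ centralBinomPolylog (k + 1) (y * (1 - y)))
      (centralBinomPolylog k (z * (1 - z)) / (z * (1 - z)) * (1 - 2 * z)) z := by
  have hne : z * (1 - z) ≠ 0 := mul_ne_zero hz.1.ne' (by linarith [hz.2])
  exact (hasDerivAt_polylogSeries_succ_of_ne_zero norm_centralBinom_mul_pow_le
    (abs_mul_one_sub_lt (Ioo_subset_Ico_self hz)) hne).comp z (hasDerivAt_mul_one_sub z)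

theorem centralBinomPolylog_zero_mul_one_sub (hz : z ∈ Ico 0 (1 / 2)) :
    centralBinomPolylog 0 (z * (1 - z)) = 2 * z / (1 - 2 * z) := by
  have hpos : 0 < 1 - 2 * z := by linarith [hz.2]
  have hsum := hasSum_centralBinom_mul_pow (abs_mul_one_sub_lt hz)
  have hsqrt : √(1 - 4 * (z * (1 - z))) = 1 - 2 * z := by
    rw [show 1 - 4 * (z * (1 - z)) = (1 - 2 * z) ^ 2 by ring, Real.sqrt_sq hpos.le]
  have h := hsum.summable.tsum_eq_zero_add
  rw [hsum.tsum_eq, hsqrt, Nat.centralBinom_zero, pow_zero] at h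
  simp only [centralBinomPolylog, polylogSeries, pow_zero, div_one]
  have hval : 1 / (1 - 2 * z) = 1 + 2 * z / (1 - 2 * z) := by
    field_simp
    ring
  push_cast at h
  linarith

theorem centralBinomPolylog_one_mul_one_sub (hz : z ∈ Ico 0 (1 / 2)) :
    centralBinomPolylog 1 (z * (1 - z)) = -2 * Real.log (1 - z) := by
  refine eqOn_of_hasDerivAt_interior_eq (x₀ := 0)
    (f := fun y ↦ centralBinomPolylog 1 (y * (1 - y))) (g := fun y ↦ -2 * Real.log (1 - y))
    (f' := fun y ↦ 2 / (1 - y)) (convex_Ico 0 (1 / 2)) (by simp) (fun y hy ↦ ?_)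
    (fun y hy ↦ ?_) ?_ ?_ ?_ hz
  · exact ((hasDerivAt_polylogSeries_succ norm_centralBinom_mul_pow_le
      (abs_mul_one_sub_lt hy)).comp y (hasDerivAt_mul_one_sub y)).continuousAt.continuousWithinAt
  · exact ((hasDerivAt_log_one_sub (by linarith [hy.2])).const_mul
      (-2)).continuousAt.continuousWithinAt
  · rw [interior_Ico]
    intro y hy
    refine (hasDerivAt_centralBinomPolylog_succ_mul_one_sub 0 hy).congr_deriv ?_
    rw [centralBinomPolylog_zero_mul_one_sub (Ioo_subset_Ico_self hy)]
    have hy₀ : y ≠ 0 := hy.1.ne'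
    have hy₁ : 1 - y ≠ 0 := by linarith [hy.2]
    have hy₂ : 1 - 2 * y ≠ 0 := by linarith [hy.2]
    field_simp
  · rw [interior_Ico]
    intro y hy
    exact ((hasDerivAt_log_one_sub (by linarith [hy.2])).const_mul (-2)).congr_deriv (by ring)
  · simp [centralBinomPolylog]

theorem centralBinomPolylog_two_mul_one_sub (hz : z ∈ Icc 0 (1 / 2)) :
    centralBinomPolylog 2 (z * (1 - z)) = 2 * dilog z - Real.log (1 - z) ^ 2 := by
  refine eqOn_of_hasDerivAt_interior_eq (x₀ := 0)
    (f := fun y ↦ centralBinomPolylog 2 (y * (1 - y)))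
    (g := fun y ↦ 2 * dilog y - Real.log (1 - y) ^ 2)
    (f' := fun y ↦ -2 * Real.log (1 - y) / y + 2 * Real.log (1 - y) / (1 - y))
    (convex_Icc 0 (1 / 2)) (by simp) ?_ ?_ ?_ ?_ ?_ hz
  · refine (continuousOn_polylogSeries norm_centralBinom_mul_pow_le one_lt_two).comp
      (by fun_prop) fun y hy ↦ ?_
    rw [mem_closedBall_zero_iff, Real.norm_eq_abs, abs_of_nonneg (by nlinarith [hy.1, hy.2])]
    nlinarith [sq_nonneg (1 - 2 * y)]
  · have hlog : ContinuousOn (fun y ↦ Real.log (1 - y)) (Icc 0 (1 / 2)) := fun y hy ↦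
      (hasDerivAt_log_one_sub (by linarith [hy.2])).continuousAt.continuousWithinAt
    have hdilog : ContinuousOn dilog (Icc 0 (1 / 2)) :=
      continuousOn_dilog.mono (Icc_subset_Icc (by norm_num) (by norm_num))
    exact (hdilog.const_mul 2).sub (hlog.pow 2)
  · rw [interior_Icc]
    intro y hy
    refine (hasDerivAt_centralBinomPolylog_succ_mul_one_sub 1 hy).congr_deriv ?_
    rw [centralBinomPolylog_one_mul_one_sub (Ioo_subset_Ico_self hy)]
    have hy₀ : y ≠ 0 := hy.1.ne'
    have hy₁ : 1 - y ≠ 0 := by linarith [hy.2]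
    field_simp
    ring
  · rw [interior_Icc]
    rintro y ⟨hy₀, hy₁⟩
    have hdilog := hasDerivAt_dilog (abs_lt.2 ⟨by linarith, by linarith⟩) hy₀.ne'
    have hlog := hasDerivAt_log_one_sub (x := y) (by linarith)
    refine ((hdilog.const_mul 2).sub (hlog.pow 2)).congr_deriv ?_
    push_cast
    ring
  · simp [centralBinomPolylog, dilog_zero]

end CentralBinom

/-- ∑_{n=1}^∞ C(2n,n)/(4ⁿ·n²) = π²/6 - 2·log²2. -/
theorem centralBinom_inv_nsq_sum :
    ∑' n : ℕ, (Nat.centralBinom (n + 1) : ℝ) / ((4 : ℝ) ^ (n + 1) * ((n : ℝ) + 1) ^ 2) =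
      Real.pi ^ 2 / 6 - 2 * Real.log 2 ^ 2 := by
  calc ∑' n : ℕ, (Nat.centralBinom (n + 1) : ℝ) / ((4 : ℝ) ^ (n + 1) * ((n : ℝ) + 1) ^ 2)
      = centralBinomPolylog 2 (1 / 2 * (1 - 1 / 2)) := by
        have hquarter : (1 / 2 : ℝ) * (1 - 1 / 2) = 4⁻¹ := by norm_num
        rw [hquarter, centralBinomPolylog, polylogSeries]
        refine tsum_congr fun n ↦ ?_
        rw [inv_pow]
        field_simp
    _ = 2 * dilog (1 / 2) - Real.log (1 - 1 / 2) ^ 2 :=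
        centralBinomPolylog_two_mul_one_sub (by norm_num)
    _ = Real.pi ^ 2 / 6 - 2 * Real.log 2 ^ 2 := by
        rw [dilog_one_half, sub_half, one_div, Real.log_inv]
        ring
end

section
/- ∑_{n=1}^∞ C(2n,n) / (4ⁿ · n³) = 2·ζ(3) - (1/3)·π²·log 2 + (4/3)·log³2. -/
/-!
Let `aₙ = (r)ₙ / n!` (which is `Ring.multichoose r n`) with `0 ≤ r < 1`; for `r = 1/2` this is
`C(2n, n) / 4ⁿ`. The series `F(s) = ∑ aₙ / (n + s)` is the Beta function `B(s, 1 - r)`, and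
telescoping proves both `s F(s) = (s + 1 - r) F(s + 1)` and the derivative of this relation, in
which `-F'(s) = ∑ aₙ / (n + s)²`. Hence `1 / s + F'(s) / F(s)` equals
`∑ₖ (1 / (k + 1 - r + s) - 1 / (k + 1 + s))`. After multiplication by `s F(s)`, both sides are power
series in `x = -s` whose coefficients involve only `Sₘ = ∑_{n ≥ 1} aₙ / nᵐ` and
`tₘ = ζ(m, 1 - r) - ζ(m)`, and comparing them gives
`(m + 1) Sₘ₊₁ = tₘ₊₁ - ∑_{i < m} Sᵢ₊₁ tₘ₋ᵢ`. For `r = 1/2` one has `t₁ = 2 log 2` and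
`tₘ = (2ᵐ - 2) ζ(m)` for `m ≥ 2`, so that `S₁`, `S₂` and `S₃` follow in turn.
-/

open Filter Topology Finset
open Ring (multichoose)

theorem eq_of_hasSum_mul_pow_of_frequently_eq {𝕜 : Type*} [NontriviallyNormedField 𝕜]
    {a b : ℕ → 𝕜} {f g : 𝕜 → 𝕜} (hf : ∀ᶠ x in 𝓝 0, HasSum (fun n ↦ a n * x ^ n) (f x))
    (hg : ∀ᶠ x in 𝓝 0, HasSum (fun n ↦ b n * x ^ n) (g x))
    (hfg : ∃ᶠ x in 𝓝[≠] 0, f x = g x) : a = b := by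
  have toPowerSeries {c : ℕ → 𝕜} {h : 𝕜 → 𝕜}
      (hh : ∀ᶠ x in 𝓝 0, HasSum (fun n ↦ c n * x ^ n) (h x)) :
      HasFPowerSeriesAt h (.ofScalars 𝕜 c) 0 := by
    rw [hasFPowerSeriesAt_iff]
    simpa [FormalMultilinearSeries.coeff_ofScalars, mul_comm] using hh
  have hfg' := ((toPowerSeries hf).analyticAt.frequently_eq_iff_eventually_eq
    (toPowerSeries hg).analyticAt).1 hfg
  have h := ((toPowerSeries hf).congr hfg').eq_formalMultilinearSeries (toPowerSeries hg)
  funext n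
  simpa [FormalMultilinearSeries.coeff_ofScalars] using congr_arg (·.coeff n) h

theorem hasSum_tsum_mul_pow {ι : Type*} {c : ι → ℕ → ℝ} {f : ι → ℝ → ℝ} {x : ℝ}
    (hc : ∀ i n, 0 ≤ c i n) (hf : ∀ i y, |y| = |x| → HasSum (fun n ↦ c i n * y ^ n) (f i y))
    (hs : Summable fun i ↦ f i |x|) :
    HasSum (fun n ↦ (∑' i, c i n) * x ^ n) (∑' i, f i x) := by
  have hsum : Summable fun p : ι × ℕ ↦ c p.1 p.2 * x ^ p.2 := by
    refine .of_norm ?_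
    simp only [norm_mul, norm_pow, Real.norm_eq_abs, abs_of_nonneg (hc _ _)]
    refine (summable_prod_of_nonneg fun p ↦ mul_nonneg (hc _ _) (by positivity)).2
      ⟨fun i ↦ (hf i |x| (abs_abs x)).summable, ?_⟩
    simpa only [(hf _ |x| (abs_abs x)).tsum_eq] using hs
  have hswap := (Equiv.prodComm ℕ ι).hasSum_iff.2 hsum.hasSum
  simp only [← (hsum.hasSum.prod_fiberwise fun i ↦ hf i x rfl).tsum_eq] at hswap ⊢
  simpa [tsum_mul_right] using
    hswap.prod_fiberwise fun n ↦ (hswap.summable.prod_factor n).hasSum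

theorem hasSum_sum_range_mul_pow_succ {a b : ℕ → ℝ} {A B x : ℝ}
    (ha : HasSum (fun n ↦ a n * x ^ n) A) (hb : HasSum (fun n ↦ b n * x ^ n) B) :
    HasSum (fun n ↦ (∑ i ∈ range n, a i * b (n - 1 - i)) * x ^ n) (x * (A * B)) := by
  have hcauchy := hasSum_sum_range_mul_of_summable_norm ha.summable.norm hb.summable.norm
  rw [ha.tsum_eq, hb.tsum_eq] at hcauchy
  rw [← hasSum_nat_add_iff' 1]
  convert! hcauchy.mul_left x using 1
  · funext n
    rw [sum_mul, mul_sum]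
    refine sum_congr rfl fun i hi ↦ ?_
    obtain ⟨k, rfl⟩ := Nat.exists_eq_add_of_le (mem_range_succ_iff.1 hi)
    rw [Nat.add_sub_cancel, Nat.add_sub_cancel_left]
    ring
  · simp

theorem norm_lt_norm_of_abs_eq_of_abs_lt {x y u : ℝ} (hy : |y| = |x|) (hu : |x| < u) :
    ‖y‖ < ‖u‖ := by
  rw [Real.norm_eq_abs, Real.norm_eq_abs, hy]
  exact hu.trans_le (le_abs_self u)

theorem hasSum_choose_div_pow_mul_pow {𝕜 : Type*} [NormedField 𝕜] (p : ℕ) {u x : 𝕜}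
    (h : ‖x‖ < ‖u‖) :
    HasSum (fun n ↦ ((n + p).choose p : 𝕜) / u ^ (n + p + 1) * x ^ n) (1 / (u - x) ^ (p + 1)) := by
  have hu : u ≠ 0 := norm_pos_iff.1 ((norm_nonneg x).trans_lt h)
  have hxu : ‖x / u‖ < 1 := by rwa [norm_div, div_lt_one (norm_pos_iff.2 hu)]
  convert! (hasSum_choose_mul_geometric_of_norm_lt_one p hxu).mul_left (1 / u ^ (p + 1)) using 1
  · funext n
    rw [div_pow, add_assoc, pow_add]
    field_simp
  · rw [← mul_div_mul_comm, ← mul_pow, mul_sub, mul_div_cancel₀ _ hu, mul_one, mul_one]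

theorem eq_sub_of_hasSum_of_tendsto {G : Type*} [AddCommGroup G] [TopologicalSpace G] [T2Space G]
    [ContinuousSub G] {f v : ℕ → G} {S l : G} (hf : HasSum f S) (hv : Tendsto v atTop (𝓝 l))
    (hfv : ∀ n, f n = v n - v (n + 1)) : S = v 0 - l := by
  refine tendsto_nhds_unique hf.tendsto_sum_nat ?_
  simpa only [hfv, sum_range_sub'] using hv.const_sub (v 0)

theorem summable_one_div_add_sub_one_div_add {u v : ℝ} (hu : 0 < u) (hv : 0 < v) :
    Summable fun k : ℕ ↦ 1 / (k + u) - 1 / (k + v) := by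
  have hsq {w : ℝ} (hw : 0 < w) : Summable fun k : ℕ ↦ 1 / (k + w) ^ 2 := by
    convert! (Real.summable_one_div_nat_add_rpow w 2).2 one_lt_two using 3 with k
    rw [abs_of_pos (by positivity), Real.rpow_two]
  refine .of_norm_bounded (((hsq hu).add (hsq hv)).mul_left |v - u|) fun k ↦ ?_
  have hprod : 1 / (k + u) - 1 / (k + v) = (v - u) * (1 / (k + u) * (1 / (k + v))) := by
    field_simp
    ring
  rw [hprod, norm_mul, Real.norm_eq_abs, Real.norm_of_nonneg (by positivity)]
  gcongr
  rw [← one_div_pow, ← one_div_pow]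
  nlinarith [sq_nonneg (1 / (k + u) - 1 / (k + v)), sq_nonneg (1 / (k + u)),
    sq_nonneg (1 / (k + v))]

theorem tendsto_zero_of_antitone_of_summable_div_add_one {a : ℕ → ℝ} (ha : Antitone a)
    (ha₀ : ∀ n, 0 ≤ a n) (hs : Summable fun n ↦ a n / (n + 1)) : Tendsto a atTop (𝓝 0) := by
  have hbdd : BddBelow (Set.range a) := ⟨0, Set.forall_mem_range.2 ha₀⟩
  have hlim := tendsto_atTop_ciInf ha hbdd
  obtain hzero | hpos := (le_ciInf ha₀).eq_or_lt
  · rwa [← hzero] at hlim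
  have hharmonic : Summable fun n : ℕ ↦ (⨅ n, a n) * (1 / ((n : ℝ) + 1)) := by
    refine .of_nonneg_of_le (fun n ↦ by positivity) (fun n ↦ ?_) hs
    rw [mul_one_div]
    gcongr
    exact ciInf_le hbdd n
  rw [summable_mul_left_iff hpos.ne'] at hharmonic
  refine absurd ((summable_nat_add_iff 1).1 ?_) Real.not_summable_one_div_natCast
  exact_mod_cast hharmonic

theorem succ_mul_multichoose_succ {R : Type*} [CommRing R] [BinomialRing R] (r : R) (n : ℕ) :
    (n + 1) * multichoose r (n + 1) = (n + r) * multichoose r n := by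
  have : IsAddTorsionFree R := BinomialRing.toIsAddTorsionFree
  refine nsmul_right_injective n.factorial_ne_zero ?_
  have h := Ring.factorial_nsmul_multichoose_eq_ascPochhammer r (n + 1)
  have h' := Ring.factorial_nsmul_multichoose_eq_ascPochhammer r n
  rw [Polynomial.ascPochhammer_smeval_eq_eval] at h h'
  rw [ascPochhammer_succ_eval, ← h', Nat.factorial_succ] at h
  simp only [nsmul_eq_mul] at h ⊢
  push_cast at h
  linear_combination h

theorem multichoose_half (n : ℕ) : multichoose (1 / 2 : ℝ) n = n.centralBinom / 4 ^ n := by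
  induction n with
  | zero => simp
  | succ n ih =>
    have hcentral : ((n : ℝ) + 1) * (n + 1).centralBinom = 2 * (2 * n + 1) * n.centralBinom := by
      exact_mod_cast n.succ_mul_centralBinom_succ
    have hmulti := succ_mul_multichoose_succ (1 / 2 : ℝ) n
    refine mul_left_cancel₀ (Nat.cast_add_one_ne_zero n : (n : ℝ) + 1 ≠ 0) ?_
    rw [hmulti, ih, ← mul_div_assoc, ← mul_div_assoc, hcentral, pow_succ]
    field_simp
    ring

section Multichoose

variable {r : ℝ}

theorem multichoose_nonneg (hr : 0 ≤ r) (n : ℕ) : 0 ≤ multichoose r n := by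
  induction n with
  | zero => simp
  | succ n ih =>
    refine nonneg_of_mul_nonneg_right ?_ (n.cast_add_one_pos (α := ℝ))
    rw [succ_mul_multichoose_succ]
    positivity

theorem multichoose_sub_multichoose_succ (r : ℝ) (n : ℕ) :
    multichoose r n - multichoose r (n + 1) = (1 - r) * (multichoose r n / (n + 1)) := by
  field_simp
  linear_combination -succ_mul_multichoose_succ r n

theorem antitone_multichoose (hr : 0 ≤ r) (hr1 : r ≤ 1) : Antitone (multichoose r) := by
  refine antitone_nat_of_succ_le fun n ↦ sub_nonneg.1 ?_
  rw [multichoose_sub_multichoose_succ]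
  have := multichoose_nonneg hr n
  have := sub_nonneg.2 hr1
  positivity

theorem summable_multichoose_div_add_one (hr : 0 ≤ r) (hr1 : r < 1) :
    Summable fun n : ℕ ↦ multichoose r n / (n + 1) := by
  refine summable_of_sum_range_le (c := 1 / (1 - r))
    (fun n ↦ div_nonneg (multichoose_nonneg hr n) (by positivity)) fun N ↦ ?_
  rw [le_div_iff₀' (sub_pos.2 hr1), mul_sum]
  simp only [← multichoose_sub_multichoose_succ, sum_range_sub', Ring.multichoose_zero_right]
  exact sub_le_self _ (multichoose_nonneg hr N)

theorem summable_multichoose_div_add (hr : 0 ≤ r) (hr1 : r < 1) {s : ℝ} (hs : 0 < s) :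
    Summable fun n : ℕ ↦ multichoose r n / (n + s) := by
  refine .of_nonneg_of_le (fun n ↦ div_nonneg (multichoose_nonneg hr n) (by positivity))
    (fun n ↦ ?_) ((summable_multichoose_div_add_one hr hr1).mul_left (1 + 1 / s))
  rw [mul_div_assoc', div_le_div_iff₀ (by positivity) (by positivity), mul_comm (1 + 1 / s),
    mul_assoc]
  refine mul_le_mul_of_nonneg_left ?_ (multichoose_nonneg hr n)
  have : (1 + 1 / s) * (n + s) = n + 1 + (n / s + s) := by
    field_simp
    ring
  rw [this]
  exact le_add_of_nonneg_right (by positivity)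

theorem tendsto_multichoose_zero (hr : 0 ≤ r) (hr1 : r < 1) :
    Tendsto (multichoose r) atTop (𝓝 0) :=
  tendsto_zero_of_antitone_of_summable_div_add_one (antitone_multichoose hr hr1.le)
    (multichoose_nonneg hr) (summable_multichoose_div_add_one hr hr1)

/-- The series `∑ (r)ₙ / (n! (n + s)ᵖ)`, where `(r)ₙ / n!` is `Ring.multichoose r n`. For `p = 1` it
is the Beta function `B(s, 1 - r)`, and for `p = 2` it is minus the derivative of that in `s`. -/
noncomputable def multichooseSeries (r : ℝ) (p : ℕ) (s : ℝ) : ℝ :=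
  ∑' n : ℕ, multichoose r n / (n + s) ^ p

theorem hasSum_multichooseSeries_one (hr : 0 ≤ r) (hr1 : r < 1) {s : ℝ} (hs : 0 < s) :
    HasSum (fun n : ℕ ↦ multichoose r n / (n + s)) (multichooseSeries r 1 s) := by
  simpa only [multichooseSeries, pow_one] using (summable_multichoose_div_add hr hr1 hs).hasSum

theorem multichoose_div_add_sq_le (hr : 0 ≤ r) {s : ℝ} (hs : 0 < s) (n : ℕ) :
    multichoose r n / (n + s) ^ 2 ≤ 1 / s * (multichoose r n / (n + s)) := by
  rw [pow_two, ← div_div, ← one_div_mul_eq_div (n + s : ℝ) (_ / _)]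
  have := multichoose_nonneg hr n
  gcongr
  exact le_add_of_nonneg_left n.cast_nonneg

theorem hasSum_multichooseSeries_two (hr : 0 ≤ r) (hr1 : r < 1) {s : ℝ} (hs : 0 < s) :
    HasSum (fun n : ℕ ↦ multichoose r n / (n + s) ^ 2) (multichooseSeries r 2 s) :=
  (Summable.of_nonneg_of_le (fun n ↦ div_nonneg (multichoose_nonneg hr n) (by positivity))
    (multichoose_div_add_sq_le hr hs)
    ((summable_multichoose_div_add hr hr1 hs).mul_left _)).hasSum

theorem multichooseSeries_one_pos (hr : 0 ≤ r) (hr1 : r < 1) {s : ℝ} (hs : 0 < s) :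
    0 < multichooseSeries r 1 s := by
  have hsum := hasSum_multichooseSeries_one hr hr1 hs
  rw [← hsum.tsum_eq]
  refine hsum.summable.tsum_pos
    (fun n ↦ div_nonneg (multichoose_nonneg hr n) (by positivity)) 0 ?_
  simpa using hs

theorem multichooseSeries_two_nonneg (hr : 0 ≤ r) {s : ℝ} :
    0 ≤ multichooseSeries r 2 s :=
  tsum_nonneg fun n ↦ div_nonneg (multichoose_nonneg hr n) (sq_nonneg _)

theorem multichooseSeries_two_le (hr : 0 ≤ r) (hr1 : r < 1) {s : ℝ} (hs : 0 < s) :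
    multichooseSeries r 2 s ≤ 1 / s * multichooseSeries r 1 s :=
  hasSum_le (multichoose_div_add_sq_le hr hs) (hasSum_multichooseSeries_two hr hr1 hs)
    ((hasSum_multichooseSeries_one hr hr1 hs).mul_left _)

theorem tendsto_natCast_mul_multichoose_div_add (hr : 0 ≤ r) (hr1 : r < 1) {s : ℝ} (hs : 0 < s) :
    Tendsto (fun n : ℕ ↦ n * multichoose r n / (n + s)) atTop (𝓝 0) := by
  refine squeeze_zero (fun n ↦ ?_) (fun n ↦ ?_) (tendsto_multichoose_zero hr hr1)
  · have := multichoose_nonneg hr n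
    positivity
  rw [mul_div_right_comm]
  refine mul_le_of_le_one_left (multichoose_nonneg hr n) ?_
  rw [div_le_one (by positivity)]
  exact le_add_of_nonneg_right hs.le

theorem tendsto_natCast_mul_multichoose_div_add_sq (hr : 0 ≤ r) (hr1 : r < 1) {s : ℝ}
    (hs : 0 < s) : Tendsto (fun n : ℕ ↦ n * multichoose r n / (n + s) ^ 2) atTop (𝓝 0) := by
  have hinv : Tendsto (fun n : ℕ ↦ (n + s)⁻¹) atTop (𝓝 0) :=
    tendsto_inv_atTop_zero.comp (tendsto_atTop_add_const_right _ s tendsto_natCast_atTop_atTop)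
  simpa [pow_two, ← div_div, ← div_eq_mul_inv] using
    (tendsto_natCast_mul_multichoose_div_add hr hr1 hs).mul hinv

theorem mul_multichooseSeries_one (hr : 0 ≤ r) (hr1 : r < 1) {s : ℝ} (hs : 0 < s) :
    s * multichooseSeries r 1 s = (s + 1 - r) * multichooseSeries r 1 (s + 1) := by
  have hsum := ((hasSum_multichooseSeries_one hr hr1 (add_pos hs one_pos)).mul_left
    (s + 1 - r)).sub ((hasSum_multichooseSeries_one hr hr1 hs).mul_left s)
  refine (sub_eq_zero.1 ((eq_sub_of_hasSum_of_tendsto hsum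
    (tendsto_natCast_mul_multichoose_div_add hr hr1 hs) fun n ↦ ?_).trans ?_)).symm
  · push_cast
    rw [succ_mul_multichoose_succ]
    field_simp
    ring
  · simp

theorem mul_multichooseSeries_two (hr : 0 ≤ r) (hr1 : r < 1) {s : ℝ} (hs : 0 < s) :
    s * multichooseSeries r 2 s - multichooseSeries r 1 s =
      (s + 1 - r) * multichooseSeries r 2 (s + 1) - multichooseSeries r 1 (s + 1) := by
  have hs1 := add_pos hs one_pos
  have hsum := (((hasSum_multichooseSeries_two hr hr1 hs1).mul_left (s + 1 - r)).sub
    (hasSum_multichooseSeries_one hr hr1 hs1)).sub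
    (((hasSum_multichooseSeries_two hr hr1 hs).mul_left s).sub
      (hasSum_multichooseSeries_one hr hr1 hs))
  refine (sub_eq_zero.1 ((eq_sub_of_hasSum_of_tendsto hsum
    (tendsto_natCast_mul_multichoose_div_add_sq hr hr1 hs) fun n ↦ ?_).trans ?_)).symm
  · push_cast
    rw [succ_mul_multichoose_succ]
    field_simp
    ring
  · simp

theorem one_div_sub_multichooseSeries_div_sub (hr : 0 ≤ r) (hr1 : r < 1) {s : ℝ} (hs : 0 < s) :
    (1 / s - multichooseSeries r 2 s / multichooseSeries r 1 s) -
        (1 / (s + 1) - multichooseSeries r 2 (s + 1) / multichooseSeries r 1 (s + 1)) =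
      1 / (s + 1 - r) - 1 / (s + 1) := by
  have hF := (multichooseSeries_one_pos hr hr1 (add_pos hs one_pos)).ne'
  have hsr : s + 1 - r ≠ 0 := by linarith
  have hF₁ : multichooseSeries r 1 s = (s + 1 - r) * multichooseSeries r 1 (s + 1) / s := by
    rw [← mul_multichooseSeries_one hr hr1 hs, mul_div_cancel_left₀ _ hs.ne']
  have hF₂ : multichooseSeries r 2 s = (multichooseSeries r 1 s +
      ((s + 1 - r) * multichooseSeries r 2 (s + 1) - multichooseSeries r 1 (s + 1))) / s := by
    rw [← mul_multichooseSeries_two hr hr1 hs, add_sub_cancel, mul_div_cancel_left₀ _ hs.ne']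
  rw [hF₂, hF₁]
  field_simp
  ring

theorem hasSum_one_div_sub_multichooseSeries_div (hr : 0 ≤ r) (hr1 : r < 1) {s : ℝ}
    (hs : 0 < s) :
    HasSum (fun k : ℕ ↦ 1 / (k + 1 - r + s) - 1 / (k + 1 + s))
      (1 / s - multichooseSeries r 2 s / multichooseSeries r 1 s) := by
  set M : ℝ → ℝ := fun s ↦ 1 / s - multichooseSeries r 2 s / multichooseSeries r 1 s
  have hM_nonneg {s : ℝ} (hs : 0 < s) : 0 ≤ M s :=
    sub_nonneg.2 ((div_le_iff₀ (multichooseSeries_one_pos hr hr1 hs)).2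
      (multichooseSeries_two_le hr hr1 hs))
  have hM_le {s : ℝ} (hs : 0 < s) : M s ≤ 1 / s :=
    sub_le_self _ (div_nonneg (multichooseSeries_two_nonneg hr)
      (multichooseSeries_one_pos hr hr1 hs).le)
  have hM_tendsto : Tendsto (fun N : ℕ ↦ M (s + N)) atTop (𝓝 0) := by
    refine squeeze_zero (fun N ↦ hM_nonneg (by positivity)) (fun N ↦ hM_le (by positivity)) ?_
    simp only [one_div]
    exact tendsto_inv_atTop_zero.comp
      (tendsto_atTop_add_const_left _ s tendsto_natCast_atTop_atTop)
  have hterm (k : ℕ) :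
      1 / (k + 1 - r + s) - 1 / (k + 1 + s) = M (s + k) - M (s + (k + 1 : ℕ)) := by
    rw [Nat.cast_add_one, ← add_assoc, one_div_sub_multichooseSeries_div_sub hr hr1 (by positivity)]
    ring_nf
  rw [hasSum_iff_tendsto_nat_of_nonneg]
  · simpa only [hterm, sum_range_sub', Nat.cast_zero, add_zero, sub_zero] using
      hM_tendsto.const_sub (M s)
  · intro k
    have : 0 < k + 1 - r + s := by linarith [k.cast_nonneg (α := ℝ)]
    exact sub_nonneg.2 (one_div_le_one_div_of_le this (by linarith))

theorem multichooseSeries_one_eq (hr : 0 ≤ r) (hr1 : r < 1) {s : ℝ} (hs : 0 < s) :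
    multichooseSeries r 1 s = 1 / s + ∑' n : ℕ, multichoose r (n + 1) / (n + 1 + s) := by
  have hsum := hasSum_multichooseSeries_one hr hr1 hs
  rw [← hsum.tsum_eq, hsum.summable.tsum_eq_zero_add]
  simp

theorem multichooseSeries_one_sub_mul_two (hr : 0 ≤ r) (hr1 : r < 1) {s : ℝ} (hs : 0 < s) :
    multichooseSeries r 1 s - s * multichooseSeries r 2 s =
      ∑' n : ℕ, (n + 1) * multichoose r (n + 1) / (n + 1 + s) ^ 2 := by
  have hsum := (hasSum_multichooseSeries_one hr hr1 hs).sub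
    ((hasSum_multichooseSeries_two hr hr1 hs).mul_left s)
  rw [← hsum.tsum_eq, hsum.summable.tsum_eq_zero_add]
  have hzero : multichoose r 0 / ((0 : ℕ) + s) - s * (multichoose r 0 / ((0 : ℕ) + s) ^ 2) = 0 := by
    field_simp
    simp
  rw [hzero, zero_add]
  refine tsum_congr fun n ↦ ?_
  push_cast
  field_simp
  ring

theorem tsum_succ_mul_multichoose_div_sq (hr : 0 ≤ r) (hr1 : r < 1) {x : ℝ} (hx : x < 0) :
    ∑' n : ℕ, (n + 1) * multichoose r (n + 1) / (n + 1 - x) ^ 2 =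
      ∑' k : ℕ, (1 / (k + 1 - r - x) - 1 / (k + 1 - x)) -
        x * ((∑' n : ℕ, multichoose r (n + 1) / (n + 1 - x)) *
          ∑' k : ℕ, (1 / (k + 1 - r - x) - 1 / (k + 1 - x))) := by
  have hs : 0 < -x := neg_pos.2 hx
  have hQ := multichooseSeries_one_sub_mul_two hr hr1 hs
  have hL := (hasSum_one_div_sub_multichooseSeries_div hr hr1 hs).tsum_eq
  have hR := multichooseSeries_one_eq hr hr1 hs
  have hF := (multichooseSeries_one_pos hr hr1 hs).ne'
  have hx₀ := hx.ne
  simp only [← sub_eq_add_neg] at hQ hL hR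
  rw [← hQ, hL, eq_sub_of_add_eq' hR.symm]
  field_simp
  ring

/-- The Dirichlet series `∑ (r)ₙ / (n! nᵐ)` over `n ≥ 1`. At `r = 1 / 2` it is
`∑ C(2n, n) / (4ⁿ nᵐ)`. -/
noncomputable def multichooseZeta (r : ℝ) (m : ℕ) : ℝ :=
  ∑' n : ℕ, multichoose r (n + 1) / (n + 1) ^ m

/-- The difference `ζ(m, 1 - r) - ζ(m)` of a Hurwitz zeta value and a zeta value, taken termwise so
that it also makes sense at `m = 1`. -/
noncomputable def hurwitzZetaDiff (r : ℝ) (m : ℕ) : ℝ :=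
  ∑' k : ℕ, (1 / (k + 1 - r) ^ m - 1 / (k + 1) ^ m)

theorem summable_multichoose_succ_div_sub (hr : 0 ≤ r) (hr1 : r < 1) {x : ℝ} (hx : x < 1) :
    Summable fun n : ℕ ↦ multichoose r (n + 1) / (n + 1 - x) := by
  have hsum := summable_multichoose_div_add hr hr1 (sub_pos.2 hx)
  have hpos (n : ℕ) : 0 < n + (1 - x) := by linarith [n.cast_nonneg (α := ℝ)]
  simp only [add_sub_assoc]
  refine hsum.of_nonneg_of_le
    (fun n ↦ div_nonneg (multichoose_nonneg hr _) (hpos n).le) fun n ↦ ?_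
  have := hpos n
  gcongr
  exact antitone_multichoose hr hr1.le n.le_succ

theorem summable_succ_mul_multichoose_succ_div_sq_sub (hr : 0 ≤ r) (hr1 : r < 1) {x : ℝ}
    (hx₀ : 0 ≤ x) (hx : x < 1) :
    Summable fun n : ℕ ↦ (n + 1) * multichoose r (n + 1) / (n + 1 - x) ^ 2 := by
  have hsum := (summable_multichoose_succ_div_sub hr hr1 hx).mul_left (1 / (1 - x))
  have hx' : 0 < 1 - x := sub_pos.2 hx
  refine hsum.of_nonneg_of_le (fun n ↦ ?_) fun n ↦ ?_
  · have := multichoose_nonneg hr (n + 1)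
    positivity
  have hpos : 0 < n + 1 - x := by linarith [n.cast_nonneg (α := ℝ)]
  have ha := multichoose_nonneg hr (n + 1)
  have hle : n + 1 ≤ (n + 1 - x) / (1 - x) := by
    rw [le_div_iff₀ hx']
    nlinarith [mul_nonneg (n.cast_nonneg (α := ℝ)) hx₀]
  calc (n + 1) * multichoose r (n + 1) / (n + 1 - x) ^ 2
      ≤ (n + 1 - x) / (1 - x) * multichoose r (n + 1) / (n + 1 - x) ^ 2 := by gcongr
    _ = 1 / (1 - x) * (multichoose r (n + 1) / (n + 1 - x)) := by field_simp

theorem hasSum_multichooseZeta_mul_pow (hr : 0 ≤ r) (hr1 : r < 1) {x : ℝ} (hx : |x| < 1) :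
    HasSum (fun j ↦ multichooseZeta r (j + 1) * x ^ j)
      (∑' n : ℕ, multichoose r (n + 1) / (n + 1 - x)) := by
  refine hasSum_tsum_mul_pow (c := fun n j ↦ multichoose r (n + 1) / (n + 1) ^ (j + 1))
    (f := fun n x ↦ multichoose r (n + 1) / (n + 1 - x))
    (fun n j ↦ div_nonneg (multichoose_nonneg hr _) (by positivity)) (fun n y hy ↦ ?_)
    (summable_multichoose_succ_div_sub hr hr1 hx)
  have hlt : |x| < (n + 1 : ℝ) := by linarith [n.cast_nonneg (α := ℝ)]
  have hgeom := hasSum_choose_div_pow_mul_pow 0 (norm_lt_norm_of_abs_eq_of_abs_lt hy hlt)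
  simpa [div_eq_mul_inv, mul_assoc] using hgeom.mul_left (multichoose r (n + 1))

theorem hasSum_succ_mul_multichooseZeta_mul_pow (hr : 0 ≤ r) (hr1 : r < 1) {x : ℝ}
    (hx : |x| < 1) :
    HasSum (fun j : ℕ ↦ (j + 1) * multichooseZeta r (j + 1) * x ^ j)
      (∑' n : ℕ, (n + 1) * multichoose r (n + 1) / (n + 1 - x) ^ 2) := by
  simp only [multichooseZeta, ← tsum_mul_left]
  refine hasSum_tsum_mul_pow
    (c := fun n j ↦ (j + 1) * (multichoose r (n + 1) / (n + 1) ^ (j + 1)))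
    (f := fun n x ↦ (n + 1) * multichoose r (n + 1) / (n + 1 - x) ^ 2)
    (fun n j ↦ mul_nonneg (by positivity) (div_nonneg (multichoose_nonneg hr _) (by positivity)))
    (fun n y hy ↦ ?_) (summable_succ_mul_multichoose_succ_div_sq_sub hr hr1 (abs_nonneg x) hx)
  have hlt : |x| < (n + 1 : ℝ) := by linarith [n.cast_nonneg (α := ℝ)]
  convert! (hasSum_choose_div_pow_mul_pow 1 (norm_lt_norm_of_abs_eq_of_abs_lt hy hlt)).mul_left
    ((n + 1) * multichoose r (n + 1)) using 1
  · funext j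
    rw [Nat.choose_one_right]
    push_cast
    field_simp
    ring
  · rw [mul_one_div]

theorem hasSum_hurwitzZetaDiff_mul_pow (hr : 0 ≤ r) {x : ℝ} (hx : |x| < 1 - r) :
    HasSum (fun j ↦ hurwitzZetaDiff r (j + 1) * x ^ j)
      (∑' k : ℕ, (1 / (k + 1 - r - x) - 1 / (k + 1 - x))) := by
  have hpos (k : ℕ) : 0 < k + 1 - r := by
    linarith [k.cast_nonneg (α := ℝ), abs_nonneg x]
  refine hasSum_tsum_mul_pow
    (c := fun (k : ℕ) j ↦ 1 / (k + 1 - r) ^ (j + 1) - 1 / (k + 1) ^ (j + 1))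
    (f := fun k x ↦ 1 / (k + 1 - r - x) - 1 / (k + 1 - x)) (fun k j ↦ ?_) (fun k y hy ↦ ?_) ?_
  · have := hpos k
    refine sub_nonneg.2 ?_
    gcongr
    linarith
  · have hlt : |x| < k + 1 - r := by linarith [k.cast_nonneg (α := ℝ)]
    have hlt' : |x| < k + 1 := by linarith
    have hsum := (hasSum_choose_div_pow_mul_pow 0 (norm_lt_norm_of_abs_eq_of_abs_lt hy hlt)).sub
      (hasSum_choose_div_pow_mul_pow 0 (norm_lt_norm_of_abs_eq_of_abs_lt hy hlt'))
    simpa [sub_mul] using hsum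
  · have hsum := summable_one_div_add_sub_one_div_add (u := 1 - r - |x|) (v := 1 - |x|)
      (by linarith) (by linarith)
    simpa only [add_sub_assoc, sub_sub] using hsum

theorem succ_mul_multichooseZeta_succ (hr : 0 ≤ r) (hr1 : r < 1) (m : ℕ) :
    (m + 1) * multichooseZeta r (m + 1) = hurwitzZetaDiff r (m + 1) -
      ∑ i ∈ range m, multichooseZeta r (i + 1) * hurwitzZetaDiff r (m - i) := by
  have hsmall : ∀ᶠ x : ℝ in 𝓝 0, |x| < 1 - r := by
    simpa using eventually_abs_sub_lt 0 (sub_pos.2 hr1)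
  have hright {x : ℝ} (hx : |x| < 1 - r) :
      HasSum (fun j : ℕ ↦ (hurwitzZetaDiff r (j + 1) - ∑ i ∈ range j,
          multichooseZeta r (i + 1) * hurwitzZetaDiff r (j - 1 - i + 1)) * x ^ j)
        (∑' k : ℕ, (1 / (k + 1 - r - x) - 1 / (k + 1 - x)) -
          x * ((∑' n : ℕ, multichoose r (n + 1) / (n + 1 - x)) *
            ∑' k : ℕ, (1 / (k + 1 - r - x) - 1 / (k + 1 - x)))) := by
    have hL := hasSum_hurwitzZetaDiff_mul_pow hr hx
    have hR := hasSum_multichooseZeta_mul_pow hr hr1 (x := x) (by linarith)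
    simpa only [sub_mul] using hL.sub (hasSum_sum_range_mul_pow_succ hR hL)
  have hneg : ∃ᶠ x : ℝ in 𝓝[≠] 0, x < 0 :=
    (eventually_mem_nhdsWithin (a := (0 : ℝ)) (s := Set.Iio 0)).frequently.filter_mono
      (nhdsWithin_mono 0 fun x hx ↦ ne_of_lt hx)
  have h := congr_fun (eq_of_hasSum_mul_pow_of_frequently_eq
    (hsmall.mono fun x hx ↦ hasSum_succ_mul_multichooseZeta_mul_pow hr hr1 (by linarith))
    (hsmall.mono fun x hx ↦ hright hx)
    (hneg.mono fun x hx ↦ tsum_succ_mul_multichoose_div_sq hr hr1 hx)) m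
  rw [h]
  congr 1
  refine sum_congr rfl fun i hi ↦ ?_
  have := mem_range.1 hi
  congr 2
  omega

end Multichoose

theorem sum_range_one_div_odd_sub_one_div_even (N : ℕ) :
    ∑ k ∈ range N, (1 / (2 * k + 1 : ℝ) - 1 / (2 * k + 2)) = harmonic (2 * N) - harmonic N := by
  induction N with
  | zero => simp
  | succ N ih =>
    rw [sum_range_succ, ih, mul_add_one, harmonic_succ, harmonic_succ, harmonic_succ]
    push_cast
    field_simp
    ring

theorem tendsto_harmonic_two_mul_sub_harmonic :
    Tendsto (fun N : ℕ ↦ (harmonic (2 * N) - harmonic N : ℝ)) atTop (𝓝 (Real.log 2)) := by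
  have hgamma := Real.tendsto_harmonic_sub_log
  have hdouble := hgamma.comp (tendsto_id.const_mul_atTop' two_pos)
  have hlim := (hdouble.sub hgamma).add_const (Real.log 2)
  rw [sub_self, zero_add] at hlim
  refine hlim.congr' ?_
  filter_upwards [eventually_ne_atTop 0] with N hN
  simp only [Function.comp_apply, id]
  rw [Nat.cast_mul, Real.log_mul (by simp) (by simpa)]
  push_cast
  ring

theorem hasSum_one_div_odd_sub_one_div_even :
    HasSum (fun k : ℕ ↦ 1 / (2 * k + 1 : ℝ) - 1 / (2 * k + 2)) (Real.log 2) := by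
  refine (hasSum_iff_tendsto_nat_of_nonneg (fun k ↦ sub_nonneg.2 (by gcongr; norm_num)) _).2 ?_
  simpa only [sum_range_one_div_odd_sub_one_div_even] using tendsto_harmonic_two_mul_sub_harmonic

theorem hurwitzZetaDiff_half_one : hurwitzZetaDiff (1 / 2) 1 = 2 * Real.log 2 := by
  rw [hurwitzZetaDiff, ← hasSum_one_div_odd_sub_one_div_even.tsum_eq, ← tsum_mul_left]
  refine tsum_congr fun k ↦ ?_
  have h : (k : ℝ) + 1 - 1 / 2 = (2 * k + 1) / 2 := by ring
  rw [h]
  field_simp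

theorem hurwitzZetaDiff_half {m : ℕ} (hm : 1 < m) :
    hurwitzZetaDiff (1 / 2) m = (2 ^ m - 2) * ∑' n : ℕ, 1 / (n : ℝ) ^ m := by
  have hsum : Summable fun n : ℕ ↦ 1 / (n : ℝ) ^ m := Real.summable_one_div_nat_pow.2 hm
  have hodd : Summable fun k : ℕ ↦ 1 / ((2 * k + 1 : ℕ) : ℝ) ^ m :=
    hsum.comp_injective (i := fun k ↦ 2 * k + 1) fun i j h ↦ by simpa using h
  have heven : HasSum (fun k : ℕ ↦ 1 / ((2 * k : ℕ) : ℝ) ^ m)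
      ((2 ^ m)⁻¹ * ∑' n : ℕ, 1 / (n : ℝ) ^ m) := by
    simpa [mul_pow, mul_comm] using hsum.hasSum.mul_left (2 ^ m)⁻¹
  have hsplit : (2 ^ m)⁻¹ * ∑' n : ℕ, 1 / (n : ℝ) ^ m +
      ∑' k : ℕ, 1 / ((2 * k + 1 : ℕ) : ℝ) ^ m = ∑' n : ℕ, 1 / (n : ℝ) ^ m := by
    rw [← heven.tsum_eq]
    exact tsum_even_add_odd (f := fun n : ℕ ↦ 1 / (n : ℝ) ^ m) heven.summable hodd
  have hhalf (k : ℕ) : 1 / ((k : ℝ) + 1 - 1 / 2) ^ m = 2 ^ m * (1 / ((2 * k + 1 : ℕ) : ℝ) ^ m) := by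
    have h : (k : ℝ) + 1 - 1 / 2 = (2 * k + 1 : ℕ) / 2 := by
      push_cast
      ring
    rw [h, div_pow, one_div_div, mul_one_div]
  have hshift : HasSum (fun k : ℕ ↦ 1 / ((k : ℝ) + 1) ^ m) (∑' n : ℕ, 1 / (n : ℝ) ^ m) := by
    simpa [(zero_lt_one.trans hm).ne'] using (hasSum_nat_add_iff' 1).2 hsum.hasSum
  simp only [hurwitzZetaDiff, hhalf]
  rw [((hodd.hasSum.mul_left (2 ^ m)).sub hshift).tsum_eq, eq_sub_of_add_eq' hsplit]
  field_simp
  ring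

theorem hurwitzZetaDiff_half_two : hurwitzZetaDiff (1 / 2) 2 = Real.pi ^ 2 / 3 := by
  rw [hurwitzZetaDiff_half one_lt_two, hasSum_zeta_two.tsum_eq]
  ring

theorem hurwitzZetaDiff_half_three :
    hurwitzZetaDiff (1 / 2) 3 = 6 * ∑' n : ℕ, 1 / (n : ℝ) ^ 3 := by
  rw [hurwitzZetaDiff_half (by norm_num)]
  norm_num

theorem multichooseZeta_half_one : multichooseZeta (1 / 2) 1 = 2 * Real.log 2 := by
  have h := succ_mul_multichooseZeta_succ (r := 1 / 2) (by norm_num) (by norm_num) 0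
  rw [← hurwitzZetaDiff_half_one]
  simpa using h

theorem multichooseZeta_half_two :
    multichooseZeta (1 / 2) 2 = Real.pi ^ 2 / 6 - 2 * Real.log 2 ^ 2 := by
  have h := succ_mul_multichooseZeta_succ (r := 1 / 2) (by norm_num) (by norm_num) 1
  simp only [sum_range_one, Nat.cast_one, Nat.reduceAdd, zero_add, Nat.sub_zero,
    multichooseZeta_half_one, hurwitzZetaDiff_half_one, hurwitzZetaDiff_half_two] at h
  linear_combination h / 2

theorem multichooseZeta_half_three :
    multichooseZeta (1 / 2) 3 = 2 * ∑' n : ℕ, 1 / (n : ℝ) ^ 3 - 1 / 3 * Real.pi ^ 2 * Real.log 2 +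
      4 / 3 * Real.log 2 ^ 3 := by
  have h := succ_mul_multichooseZeta_succ (r := 1 / 2) (by norm_num) (by norm_num) 2
  simp only [sum_range_succ, sum_range_zero, Nat.cast_ofNat, Nat.reduceAdd, zero_add, Nat.sub_zero,
    Nat.reduceSub, multichooseZeta_half_one, multichooseZeta_half_two, hurwitzZetaDiff_half_one,
    hurwitzZetaDiff_half_two, hurwitzZetaDiff_half_three] at h
  linear_combination h / 3

/-- ∑_{n=1}^∞ C(2n,n)/(4ⁿ·n³) = 2·ζ(3) - (1/3)·π²·log 2 + (4/3)·log³2. -/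
theorem centralBinom_inv_ncube_sum :
    ((∑' n : ℕ, (Nat.centralBinom (n + 1) : ℝ) /
        ((4 : ℝ) ^ (n + 1) * ((n : ℝ) + 1) ^ 3) : ℝ) : ℂ) =
      2 * riemannZeta 3 - (1 / 3) * (Real.pi : ℂ) ^ 2 * (Real.log 2 : ℂ)
        + (4 / 3) * (Real.log 2 : ℂ) ^ 3 := by
  have hzeta : riemannZeta 3 = ((∑' n : ℕ, 1 / (n : ℝ) ^ 3 : ℝ) : ℂ) := by
    push_cast
    exact zeta_nat_eq_tsum_of_gt_one (k := 3) (by norm_num)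
  have hterm : ∑' n : ℕ, (Nat.centralBinom (n + 1) : ℝ) / (4 ^ (n + 1) * ((n : ℝ) + 1) ^ 3) =
      multichooseZeta (1 / 2) 3 := by
    simp only [multichooseZeta, multichoose_half, div_div]
  rw [hterm, multichooseZeta_half_three, hzeta]
  push_cast
  ring
end

section
/- ∑_{n=1}^∞ C(2n,n) / (4ⁿ · n⁴) = (1/40)·π⁴ - 4·ζ(3)·log 2 + (1/3)·π²·log²2 - (2/3)·log⁴2. -/
/-!
Let `w n = C(2n, n) / 4 ^ n` and `S k = ∑_{n ≥ 1} w n / n ^ k`. The series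
`H s = 1 + s * ∑_{n ≥ 1} w n / (n + s)` has Taylor coefficients `1, S 1, -S 2, S 3, -S 4, …` at `0`.
By telescoping, `(s + 1) H(s) = (s + 1/2) H(s + 1)`, so that `H'/H` at `s` and at `s + 1` differ by
`1 / (s + 1/2) - 1 / (s + 1)`. Since `0 ≤ H'/H ≤ 1 / s` for `s > 0`, iterating gives
`H'/H (s) = ∑_{k ≥ 0} (1 / (s + k + 1/2) - 1 / (s + k + 1))`, whose Taylor coefficients at `0` are
`2 log 2` and `(-1) ^ (j + 1) (2 ^ (j + 2) - 2) ζ(j + 2)`. Comparing coefficients in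
`H' = (H'/H) * H` determines `S 1`, `S 2`, `S 3` and `S 4` in turn.
-/

open Filter Finset Topology
open FormalMultilinearSeries (coeff_ofScalars ofScalars ofScalars_apply_eq
  ofScalars_series_injective ofScalars_sub)
open scoped Nat

theorem hasSum_tsum_of_hasSum_prod {ι κ E : Type*} [AddCommGroup E] [UniformSpace E]
    [IsUniformAddGroup E] [CompleteSpace E] [T2Space E] {F : ι × κ → E} {g : ι → E}
    (hF : Summable F) (hg : ∀ i, HasSum (fun k => F (i, k)) (g i)) :
    HasSum (fun k => ∑' i, F (i, k)) (∑' i, g i) := by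
  have hswap := hF.prod_symm
  rw [(hF.hasSum.prod_fiberwise hg).tsum_eq, ← (Equiv.prodComm κ ι).tsum_eq F]
  exact hswap.hasSum.prod_fiberwise fun k => (hswap.prod_factor k).hasSum

section PowerSeries

variable {𝕜 : Type*} [NontriviallyNormedField 𝕜]

theorem hasSum_div_mul_neg_div_pow {a x h : 𝕜} (hx : ‖h‖ < ‖x‖) :
    HasSum (fun k : ℕ => a / x * (-h / x) ^ k) (a / (x + h)) := by
  have hx0 : x ≠ 0 := norm_pos_iff.1 ((norm_nonneg h).trans_lt hx)
  have hratio : ‖-h / x‖ < 1 := by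
    rwa [norm_div, norm_neg, div_lt_one (norm_pos_iff.2 hx0)]
  have hfactor : x + h = x * (1 - -h / x) := by field_simp; ring
  rw [hfactor, ← div_div, div_eq_mul_inv _ (1 - -h / x)]
  exact (hasSum_geometric_of_norm_lt_one hratio).mul_left _

theorem hasFPowerSeriesAt_add_mul {f : 𝕜 → 𝕜} {a : ℕ → 𝕜}
    (hf : HasFPowerSeriesAt f (ofScalars 𝕜 fun n => a (n + 1)) 0) :
    HasFPowerSeriesAt (fun z => a 0 + z * f z) (ofScalars 𝕜 a) 0 := by
  rw [hasFPowerSeriesAt_iff] at hf ⊢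
  filter_upwards [hf] with z hz
  rw [← hasSum_nat_add_iff' 1]
  simpa [pow_succ', mul_assoc] using hz.mul_left z

theorem iteratedDeriv_eq_factorial_mul_coeff [CompleteSpace 𝕜] [CharZero 𝕜] {f : 𝕜 → 𝕜}
    {a : ℕ → 𝕜} {z : 𝕜} (hf : HasFPowerSeriesAt f (ofScalars 𝕜 a) z) (n : ℕ) :
    iteratedDeriv n f z = n ! * a n := by
  have taylor := hf.analyticAt.hasFPowerSeriesAt.eq_formalMultilinearSeries hf
  rw [← congrFun (ofScalars_series_injective 𝕜 𝕜 taylor) n,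
    mul_div_cancel₀ _ (Nat.cast_ne_zero.2 n.factorial_ne_zero)]

theorem succ_mul_coeff_succ_of_logDeriv [CompleteSpace 𝕜] [CharZero 𝕜] {f : 𝕜 → 𝕜}
    {a b : ℕ → 𝕜} {z : 𝕜} (hf : HasFPowerSeriesAt f (ofScalars 𝕜 a) z)
    (hlog : HasFPowerSeriesAt (logDeriv f) (ofScalars 𝕜 b) z) (hfz : f z ≠ 0) (n : ℕ) :
    (n + 1) * a (n + 1) = ∑ p ∈ antidiagonal n, b p.1 * a p.2 := by
  have hderiv : deriv f =ᶠ[𝓝 z] logDeriv f * f := by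
    filter_upwards [hf.analyticAt.continuousAt.eventually_ne hfz] with w hw
    rw [Pi.mul_apply, logDeriv_apply, div_mul_cancel₀ _ hw]
  have leibniz := iteratedDeriv_mul (n := n) hlog.analyticAt.contDiffAt hf.analyticAt.contDiffAt
  rw [← hderiv.iteratedDeriv_eq n, ← iteratedDeriv_succ',
    iteratedDeriv_eq_factorial_mul_coeff hf] at leibniz
  apply mul_left_cancel₀ (Nat.cast_ne_zero.2 n.factorial_ne_zero : (n ! : 𝕜) ≠ 0)
  rw [Finset.Nat.sum_antidiagonal_eq_sum_range_succ fun i j => b i * a j, mul_sum]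
  calc (n ! : 𝕜) * ((n + 1) * a (n + 1)) = (n + 1)! * a (n + 1) := by
        push_cast [Nat.factorial_succ]; ring
    _ = _ := leibniz
    _ = _ := sum_congr rfl fun i hi => by
        rw [iteratedDeriv_eq_factorial_mul_coeff hlog, iteratedDeriv_eq_factorial_mul_coeff hf,
          ← Nat.choose_mul_factorial_mul_factorial (mem_range_succ_iff.1 hi)]
        push_cast
        ring

variable {ι : Type*} {a x : ι → 𝕜} {r : ℝ} {z w : 𝕜}

theorem summable_norm_div_add (hr : 0 < r) (hw : ∀ i, r ≤ ‖x i + w‖) (hz : ∀ i, x i + z ≠ 0)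
    (ha : Summable fun i => ‖a i / (x i + z)‖) : Summable fun i => ‖a i / (x i + w)‖ := by
  refine Summable.of_nonneg_of_le (fun i => norm_nonneg _) (fun i => ?_)
    (ha.mul_right (1 + ‖z - w‖ / r))
  have hwi : x i + w ≠ 0 := norm_pos_iff.1 (hr.trans_le (hw i))
  have hratio : a i / (x i + w) = a i / (x i + z) * (1 + (z - w) / (x i + w)) := by
    have := hz i
    field_simp
    ring
  rw [hratio, norm_mul]
  gcongr
  calc ‖1 + (z - w) / (x i + w)‖ ≤ ‖(1 : 𝕜)‖ + ‖(z - w) / (x i + w)‖ := norm_add_le _ _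
    _ ≤ 1 + ‖z - w‖ / r := by
        rw [norm_one, norm_div]
        gcongr
        exact hw i

theorem hasFPowerSeriesAt_tsum_div_add [CompleteSpace 𝕜] (hr : 0 < r)
    (hx : ∀ i, r ≤ ‖x i + z‖) (ha : Summable fun i => ‖a i / (x i + z)‖) :
    HasFPowerSeriesAt (fun w => ∑' i, a i / (x i + w))
      (ofScalars 𝕜 fun k => (-1) ^ k * ∑' i, a i / (x i + z) ^ (k + 1)) z := by
  rw [hasFPowerSeriesAt_iff]
  filter_upwards [Metric.ball_mem_nhds 0 hr] with h hh
  rw [mem_ball_zero_iff] at hh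
  let F (p : ι × ℕ) : 𝕜 := a p.1 / (x p.1 + z) * (-h / (x p.1 + z)) ^ p.2
  have hF : Summable F := by
    refine .of_norm_bounded (ha.mul_of_nonneg
      (summable_geometric_of_lt_one (by positivity) ((div_lt_one hr).2 hh))
      (fun _ => norm_nonneg _) (fun _ => by positivity)) fun p => ?_
    rw [norm_mul, norm_pow, norm_div (-h), norm_neg]
    gcongr
    exact hx p.1
  have hrow (i) : HasSum (fun k => F (i, k)) (a i / (x i + (z + h))) := by
    rw [← add_assoc]
    exact hasSum_div_mul_neg_div_pow (hh.trans_le (hx i))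
  have hcol (k) : h ^ k • ((-1) ^ k * ∑' i, a i / (x i + z) ^ (k + 1)) = ∑' i, F (i, k) := by
    rw [smul_eq_mul, ← mul_assoc, ← tsum_mul_left]
    refine tsum_congr fun i => ?_
    simp only [F]
    rw [div_pow, neg_pow, div_mul_div_comm, ← pow_succ']
    ring
  simp only [coeff_ofScalars, hcol]
  exact hasSum_tsum_of_hasSum_prod hF hrow

end PowerSeries

section RealPoles

variable {a s : ℝ} {c : ℕ → ℝ}

theorem le_norm_natCast_add_add (hs : -a < s) (n : ℕ) : s + a ≤ ‖(n : ℝ) + a + s‖ := by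
  rw [Real.norm_of_nonneg] <;> linarith [n.cast_nonneg (α := ℝ)]

theorem summable_div_natCast_add_add (ha : 0 < a) (hs : -a < s)
    (hc : Summable fun n : ℕ => c n / (n + a)) : Summable fun n : ℕ => c n / (n + a + s) :=
  .of_norm <| summable_norm_div_add (z := 0) (neg_lt_iff_pos_add.1 hs)
    (le_norm_natCast_add_add hs) (fun n => by positivity)
    (by simpa only [add_zero] using hc.norm)

theorem hasFPowerSeriesAt_tsum_div_natCast_add_add (ha : 0 < a) (hs : -a < s)
    (hc : Summable fun n : ℕ => c n / (n + a)) :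
    HasFPowerSeriesAt (fun t => ∑' n : ℕ, c n / (n + a + t))
      (ofScalars ℝ fun k => (-1) ^ k * ∑' n : ℕ, c n / (n + a + s) ^ (k + 1)) s :=
  hasFPowerSeriesAt_tsum_div_add (neg_lt_iff_pos_add.1 hs) (le_norm_natCast_add_add hs)
    (summable_div_natCast_add_add ha hs hc).norm

end RealPoles

/-- The Wallis ratio `(1/2)(3/2)⋯(n - 1/2) / n!`. -/
noncomputable def wallisRatio (n : ℕ) : ℝ := n.centralBinom / 4 ^ n

@[simp]
theorem wallisRatio_zero : wallisRatio 0 = 1 := by simp [wallisRatio]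

theorem wallisRatio_pos (n : ℕ) : 0 < wallisRatio n :=
  div_pos (Nat.cast_pos.2 n.centralBinom_pos) (by positivity)

theorem wallisRatio_succ (n : ℕ) :
    wallisRatio (n + 1) = (n + 1 / 2) / (n + 1) * wallisRatio n := by
  have h : ((n : ℝ) + 1) * (n + 1).centralBinom = 2 * (2 * n + 1) * n.centralBinom := by
    exact_mod_cast n.succ_mul_centralBinom_succ
  rw [wallisRatio, wallisRatio, pow_succ]
  field_simp
  linarith

theorem sq_wallisRatio_le (n : ℕ) : wallisRatio n ^ 2 ≤ 1 / (2 * n + 1) := by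
  induction n with
  | zero => simp
  | succ n ih =>
    calc wallisRatio (n + 1) ^ 2
        = (((n : ℝ) + 1 / 2) / (n + 1)) ^ 2 * wallisRatio n ^ 2 := by rw [wallisRatio_succ, mul_pow]
      _ ≤ (((n : ℝ) + 1 / 2) / (n + 1)) ^ 2 * (1 / (2 * n + 1)) := by gcongr
      _ = (2 * (n : ℝ) + 1) / (2 * (n + 1)) ^ 2 := by field_simp
      _ ≤ 1 / (2 * ((n + 1 : ℕ) : ℝ) + 1) := by
        rw [div_le_div_iff₀ (by positivity) (by positivity)]
        push_cast
        nlinarith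

theorem tendsto_wallisRatio : Tendsto wallisRatio atTop (𝓝 0) := by
  have hbound : Tendsto (fun n : ℕ => 1 / (2 * (n : ℝ) + 1)) atTop (𝓝 0) :=
    tendsto_const_nhds.div_atTop (tendsto_atTop_add_const_right _ _
      (tendsto_natCast_atTop_atTop.const_mul_atTop two_pos))
  have hsq := (squeeze_zero (fun n => sq_nonneg _) sq_wallisRatio_le hbound).sqrt
  simpa only [Real.sqrt_sq (wallisRatio_pos _).le, Real.sqrt_zero] using hsq

theorem summable_wallisRatio_div : Summable fun n : ℕ => wallisRatio (n + 1) / (n + 1) := by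
  have hdiff (n : ℕ) : wallisRatio (n + 1) / (n + 1)
      ≤ 2 * (wallisRatio n - wallisRatio (n + 1)) := by
    have hn := wallisRatio_pos n
    rw [wallisRatio_succ, div_le_iff₀ (by positivity)]
    field_simp
    linarith
  refine summable_of_sum_range_le (c := 2)
    (fun n => (div_pos (wallisRatio_pos _) n.cast_add_one_pos).le) fun N => ?_
  calc ∑ n ∈ range N, wallisRatio (n + 1) / (n + 1)
      ≤ ∑ n ∈ range N, 2 * (wallisRatio n - wallisRatio (n + 1)) := sum_le_sum fun n _ => hdiff n
    _ = 2 * (1 - wallisRatio N) := by rw [← mul_sum, sum_range_sub', wallisRatio_zero]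
    _ ≤ 2 := by linarith [wallisRatio_pos N]

/-- The partial fraction expansion of `√π * Γ(s + 1) / Γ(s + 1/2)`. -/
noncomputable def wallisSeries (s : ℝ) : ℝ :=
  1 + s * ∑' n : ℕ, wallisRatio (n + 1) / (n + 1 + s)

section WallisSeries

variable {s : ℝ}

theorem summable_wallisRatio_div_add (hs : -1 < s) :
    Summable fun n : ℕ => wallisRatio (n + 1) / (n + 1 + s) :=
  summable_div_natCast_add_add one_pos hs summable_wallisRatio_div

theorem add_one_mul_wallisSeries (hs : -1 < s) :
    (s + 1) * wallisSeries s = (s + 1 / 2) * wallisSeries (s + 1) := by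
  let u (n : ℕ) : ℝ := n / (n + s) * wallisRatio n
  have hu : Tendsto u atTop (𝓝 0) := by
    simpa using (tendsto_natCast_div_add_atTop s).mul tendsto_wallisRatio
  have htelescope (n : ℕ) : (s + 1 / 2) * (wallisRatio (n + 1) / (n + 1 + (s + 1)))
      - s * (wallisRatio (n + 1) / (n + 1 + s)) = u (n + 1) - u (n + 1 + 1) := by
    have h₀ : (n : ℝ) + 1 + s ≠ 0 := by linarith [n.cast_nonneg (α := ℝ)]
    have h₁ : (n : ℝ) + 1 + (s + 1) ≠ 0 := by linarith
    have h₂ : (n : ℝ) + 1 + 1 + s ≠ 0 := by linarith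
    simp only [u, wallisRatio_succ (n + 1)]
    push_cast
    field_simp
    ring
  have hsum {t : ℝ} (ht : -1 < t) := (summable_wallisRatio_div_add ht).hasSum
  have hlim := (((hsum (by linarith : -1 < s + 1)).mul_left (s + 1 / 2)).sub
    ((hsum hs).mul_left s)).tendsto_sum_nat
  simp only [htelescope, sum_range_sub' fun n => u (n + 1)] at hlim
  have hdiff := tendsto_nhds_unique hlim
    (((tendsto_add_atTop_iff_nat 1).2 hu).const_sub (u 1))
  have hu₁ : u 1 = 1 / 2 / (1 + s) := by
    simp only [u, wallisRatio_succ, wallisRatio_zero, Nat.cast_one, Nat.cast_zero]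
    ring
  rw [hu₁, sub_zero] at hdiff
  have : 1 + s ≠ 0 := by linarith
  field_simp at hdiff
  simp only [wallisSeries]
  linear_combination (-1 / 2) * hdiff

theorem hasDerivAt_wallisSeries (hs : -1 < s) :
    HasDerivAt wallisSeries (∑' n : ℕ, wallisRatio (n + 1) / (n + 1 + s)
      - s * ∑' n : ℕ, wallisRatio (n + 1) / (n + 1 + s) ^ 2) s := by
  have hsum := (hasFPowerSeriesAt_tsum_div_natCast_add_add one_pos hs
    summable_wallisRatio_div).hasDerivAt
  refine (((hasDerivAt_id s).mul hsum).const_add 1).congr_deriv ?_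
  simp only [ofScalars_apply_eq, id, smul_eq_mul, one_pow]
  ring

theorem one_le_wallisSeries (hs : 0 ≤ s) : 1 ≤ wallisSeries s :=
  le_add_of_nonneg_right <| mul_nonneg hs <| tsum_nonneg fun _ =>
    div_nonneg (wallisRatio_pos _).le (by positivity)

theorem wallisSeries_pos (hs : -(1 / 2) < s) : 0 < wallisSeries s := by
  have hshift := one_le_wallisSeries (by linarith : 0 ≤ s + 1)
  have hmul : 0 < (s + 1) * wallisSeries s := by
    rw [add_one_mul_wallisSeries (by linarith)]
    exact mul_pos (by linarith) (by linarith)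
  exact pos_of_mul_pos_right hmul (by linarith)

theorem logDeriv_wallisSeries_nonneg (hs : 0 ≤ s) : 0 ≤ logDeriv wallisSeries s := by
  have hterm (n : ℕ) : s * (wallisRatio (n + 1) / (n + 1 + s) ^ 2)
      ≤ wallisRatio (n + 1) / (n + 1 + s) := by
    have hw := wallisRatio_pos (n + 1)
    rw [← mul_div_assoc, div_le_div_iff₀ (by positivity) (by positivity)]
    have : 0 ≤ wallisRatio (n + 1) * (n + 1 + s) * (n + 1) := by positivity
    linarith
  have hsum := summable_wallisRatio_div_add (by linarith : -1 < s)
  have hle := Summable.tsum_le_tsum hterm (.of_nonneg_of_le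
    (fun n => mul_nonneg hs (div_nonneg (wallisRatio_pos _).le (by positivity))) hterm hsum) hsum
  rw [logDeriv_apply, (hasDerivAt_wallisSeries (by linarith)).deriv, ← tsum_mul_left]
  exact div_nonneg (sub_nonneg.2 hle) (wallisSeries_pos (by linarith)).le

theorem logDeriv_wallisSeries_le (hs : 0 < s) : logDeriv wallisSeries s ≤ 1 / s := by
  have hsq : 0 ≤ ∑' n : ℕ, wallisRatio (n + 1) / (n + 1 + s) ^ 2 :=
    tsum_nonneg fun _ => div_nonneg (wallisRatio_pos _).le (by positivity)
  rw [logDeriv_apply, (hasDerivAt_wallisSeries (by linarith)).deriv,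
    div_le_div_iff₀ (wallisSeries_pos (by linarith)) hs, wallisSeries]
  linarith [mul_nonneg (mul_nonneg hs.le hs.le) hsq]

theorem tendsto_logDeriv_wallisSeries_add_natCast (s : ℝ) :
    Tendsto (fun N : ℕ => logDeriv wallisSeries (s + N)) atTop (𝓝 0) := by
  have hatTop : Tendsto (fun N : ℕ => s + N) atTop atTop :=
    tendsto_atTop_add_const_left _ _ tendsto_natCast_atTop_atTop
  refine Tendsto.comp ?_ hatTop
  have hinv : Tendsto (fun t : ℝ => 1 / t) atTop (𝓝 0) := tendsto_const_nhds.div_atTop tendsto_id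
  refine tendsto_of_tendsto_of_tendsto_of_le_of_le' tendsto_const_nhds hinv ?_ ?_
  · filter_upwards [eventually_ge_atTop 0] with t using logDeriv_wallisSeries_nonneg
  · filter_upwards [eventually_gt_atTop 0] with t using logDeriv_wallisSeries_le

theorem logDeriv_wallisSeries_eq_add (hs : -(1 / 2) < s) :
    logDeriv wallisSeries s
      = 1 / (s + 1 / 2) - 1 / (s + 1) + logDeriv wallisSeries (s + 1) := by
  have hfun : (fun t => (t + 1) * wallisSeries t)
      =ᶠ[𝓝 s] fun t => (t + 1 / 2) * wallisSeries (t + 1) := by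
    filter_upwards [eventually_gt_nhds (by linarith : -1 < s)] with t
      using add_one_mul_wallisSeries
  have hlog := (logDeriv_congr_nhds hfun).eq_of_nhds
  have hdiff {t : ℝ} (ht : -1 < t) : DifferentiableAt ℝ wallisSeries t :=
    (hasDerivAt_wallisSeries ht).differentiableAt
  rw [logDeriv_mul s (by linarith) (wallisSeries_pos hs).ne' (by fun_prop) (hdiff (by linarith)),
    logDeriv_mul (g := fun t => wallisSeries (t + 1)) s (by linarith)
      (wallisSeries_pos (by linarith)).ne' (by fun_prop)
      (differentiableAt_comp_add_const.2 (hdiff (by linarith)))] at hlog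
  simp only [logDeriv_apply, deriv_comp_add_const, deriv_add_const, deriv_id''] at hlog ⊢
  linarith

theorem tendsto_sum_one_div_sub_logDeriv_wallisSeries (hs : -(1 / 2) < s) :
    Tendsto (fun N : ℕ => ∑ k ∈ range N, (1 / (k + 1 / 2 + s) - 1 / (k + 1 + s))) atTop
      (𝓝 (logDeriv wallisSeries s)) := by
  have hpartial (N : ℕ) : ∑ k ∈ range N, (1 / (k + 1 / 2 + s) - 1 / (k + 1 + s))
      = logDeriv wallisSeries s - logDeriv wallisSeries (s + N) := by
    induction N with
    | zero => simp
    | succ N ih =>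
      have := N.cast_nonneg (α := ℝ)
      rw [sum_range_succ, ih, logDeriv_wallisSeries_eq_add (by linarith : -(1 / 2) < s + N)]
      push_cast
      ring_nf
  simpa only [hpartial, sub_zero] using
    (tendsto_logDeriv_wallisSeries_add_natCast s).const_sub (logDeriv wallisSeries s)

end WallisSeries

/-- `ζ(k)` as a real number, for `k ≥ 2`. -/
noncomputable def realZeta (k : ℕ) : ℝ := ∑' n : ℕ, 1 / (n : ℝ) ^ k

theorem riemannZeta_natCast_eq_realZeta {k : ℕ} (hk : 1 < k) : riemannZeta k = realZeta k := by
  rw [zeta_nat_eq_tsum_of_gt_one hk, realZeta]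
  push_cast
  rfl

theorem summable_one_div_natCast_add_pow (a : ℝ) {k : ℕ} (hk : 1 < k) :
    Summable fun n : ℕ => 1 / ((n : ℝ) + a) ^ k := by
  rw [← summable_norm_iff]
  simpa using (Real.summable_one_div_nat_add_rpow a k).2 (by exact_mod_cast hk)

theorem tsum_one_div_natCast_add_one_pow {k : ℕ} (hk : 1 < k) :
    ∑' n : ℕ, 1 / ((n : ℝ) + 1) ^ k = realZeta k := by
  rw [realZeta, (Real.summable_one_div_nat_pow.2 hk).tsum_eq_zero_add]
  simp [(zero_lt_one.trans hk).ne']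

theorem tsum_one_div_natCast_add_half_pow {k : ℕ} (hk : 1 < k) :
    ∑' n : ℕ, 1 / ((n : ℝ) + 1 / 2) ^ k = (2 ^ k - 1) * realZeta k := by
  have heven (n : ℕ) : 1 / ((2 * n : ℕ) : ℝ) ^ k = 1 / 2 ^ k * (1 / (n : ℝ) ^ k) := by
    rw [Nat.cast_mul, Nat.cast_two, mul_pow, one_div_mul_one_div]
  have hodd (n : ℕ) : 1 / ((2 * n + 1 : ℕ) : ℝ) ^ k
      = 1 / 2 ^ k * (1 / ((n : ℝ) + 1 / 2) ^ k) := by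
    rw [one_div_mul_one_div, ← mul_pow]
    push_cast
    ring_nf
  have hzeta := Real.summable_one_div_nat_pow.2 hk
  have hsplit := tsum_even_add_odd (f := fun n : ℕ => 1 / (n : ℝ) ^ k)
    (hzeta.comp_injective (mul_right_injective₀ two_ne_zero))
    (hzeta.comp_injective ((add_left_injective 1).comp (mul_right_injective₀ two_ne_zero)))
  simp only [heven, hodd, tsum_mul_left] at hsplit
  rw [← realZeta, ← mul_add, one_div_mul_eq_div, div_eq_iff (by positivity)] at hsplit
  linarith

theorem tendsto_sum_one_div_add_half_sub_one_div_add_one :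
    Tendsto (fun N : ℕ => ∑ k ∈ range N, (1 / ((k : ℝ) + 1 / 2) - 1 / (k + 1))) atTop
      (𝓝 (2 * Real.log 2)) := by
  have hharmonic (N : ℕ) : ∑ k ∈ range N, (1 / ((k : ℝ) + 1 / 2) - 1 / (k + 1))
      = 2 * ((harmonic (2 * N) : ℝ) - harmonic N) := by
    induction N with
    | zero => simp
    | succ N ih =>
      rw [sum_range_succ, ih, show 2 * (N + 1) = 2 * N + 1 + 1 by ring, harmonic_succ,
        harmonic_succ, harmonic_succ]
      push_cast
      field_simp
      ring
  have hdouble : Tendsto (fun N : ℕ => 2 * N) atTop atTop :=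
    tendsto_id.const_mul_atTop' two_pos
  have hlim := (((Real.tendsto_harmonic_sub_log.comp hdouble).sub
    Real.tendsto_harmonic_sub_log).add_const (Real.log 2)).const_mul 2
  rw [sub_self, zero_add] at hlim
  refine hlim.congr' ?_
  filter_upwards [eventually_ne_atTop 0] with N hN
  rw [hharmonic, Function.comp_apply, Nat.cast_mul, Nat.cast_two,
    Real.log_mul two_ne_zero (Nat.cast_ne_zero.2 hN)]
  ring

theorem summable_one_div_natCast_add_div (a : ℝ) :
    Summable fun n : ℕ => 1 / ((n : ℝ) + a) / (n + a) := by
  simpa only [div_div, ← sq] using summable_one_div_natCast_add_pow a one_lt_two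

theorem logDeriv_wallisSeries_eq_tsum {s : ℝ} (hs : -(1 / 2) < s) :
    logDeriv wallisSeries s = 2 * Real.log 2
      + s * (∑' n : ℕ, 1 / ((n : ℝ) + 1) / (n + 1 + s)
        - ∑' n : ℕ, 1 / ((n : ℝ) + 1 / 2) / (n + 1 / 2 + s)) := by
  have hsum {a : ℝ} (ha : 0 < a) (hs : -a < s) :=
    (summable_div_natCast_add_add ha hs (summable_one_div_natCast_add_div a)).hasSum
  have hinv {a : ℝ} (ha : 0 < a) (hs : -a < s) (n : ℕ) :
      1 / ((n : ℝ) + a + s) = 1 / (n + a) - s * (1 / (n + a) / (n + a + s)) := by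
    have : (n : ℝ) + a + s ≠ 0 := by linarith [n.cast_nonneg (α := ℝ)]
    field_simp
    ring
  have hterm (n : ℕ) : (1 / ((n : ℝ) + 1 / 2) - 1 / (n + 1))
      + s * (1 / ((n : ℝ) + 1) / (n + 1 + s) - 1 / ((n : ℝ) + 1 / 2) / (n + 1 / 2 + s))
      = 1 / (n + 1 / 2 + s) - 1 / (n + 1 + s) := by
    rw [hinv one_half_pos hs, hinv one_pos (by linarith)]
    ring
  have hlim := tendsto_sum_one_div_add_half_sub_one_div_add_one.add
    (((hsum one_pos (by linarith)).sub (hsum one_half_pos hs)).mul_left s).tendsto_sum_nat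
  simp only [← sum_add_distrib, hterm] at hlim
  exact tendsto_nhds_unique (tendsto_sum_one_div_sub_logDeriv_wallisSeries hs) hlim

/-- The sum of the central binomial coefficients `C(2n, n)` weighted by `1 / (4 ^ n * n ^ k)`, over
`n ≥ 1`. -/
noncomputable def centralBinomSum (k : ℕ) : ℝ := ∑' n : ℕ, wallisRatio (n + 1) / ((n : ℝ) + 1) ^ k

/-- The Taylor coefficients of `wallisSeries` at `0`. -/
noncomputable def wallisCoeff : ℕ → ℝ
  | 0 => 1
  | k + 1 => (-1) ^ k * centralBinomSum (k + 1)

/-- The Taylor coefficients of the logarithmic derivative of `wallisSeries` at `0`. -/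
noncomputable def wallisLogDerivCoeff : ℕ → ℝ
  | 0 => 2 * Real.log 2
  | k + 1 => (-1) ^ (k + 1) * (2 ^ (k + 2) - 2) * realZeta (k + 2)

theorem hasFPowerSeriesAt_wallisSeries :
    HasFPowerSeriesAt wallisSeries (ofScalars ℝ wallisCoeff) 0 := by
  have h := hasFPowerSeriesAt_tsum_div_natCast_add_add one_pos neg_one_lt_zero
    summable_wallisRatio_div
  simp only [add_zero] at h
  exact hasFPowerSeriesAt_add_mul (a := wallisCoeff) h

theorem hasFPowerSeriesAt_logDeriv_wallisSeries :
    HasFPowerSeriesAt (logDeriv wallisSeries) (ofScalars ℝ wallisLogDerivCoeff) 0 := by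
  have hcoeff (k : ℕ) : wallisLogDerivCoeff (k + 1)
      = (-1) ^ k * ∑' n : ℕ, 1 / ((n : ℝ) + 1) ^ (k + 2)
        - (-1) ^ k * ∑' n : ℕ, 1 / ((n : ℝ) + 1 / 2) ^ (k + 2) := by
    rw [tsum_one_div_natCast_add_one_pow (by lia), tsum_one_div_natCast_add_half_pow (by lia),
      wallisLogDerivCoeff]
    ring
  have hpoles {a : ℝ} (ha : 0 < a) := hasFPowerSeriesAt_tsum_div_natCast_add_add ha
    (neg_lt_zero.2 ha) (summable_one_div_natCast_add_div a)
  have hdiff := (hpoles one_pos).sub (hpoles one_half_pos)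
  simp only [← ofScalars_sub, Pi.sub_def, add_zero, div_div, ← pow_succ', ← hcoeff] at hdiff
  refine (hasFPowerSeriesAt_add_mul hdiff).congr ?_
  filter_upwards [eventually_gt_nhds (by norm_num : -(1 / 2 : ℝ) < 0)] with s hs
  simpa only [wallisLogDerivCoeff, div_div] using (logDeriv_wallisSeries_eq_tsum hs).symm

theorem succ_mul_wallisCoeff_succ (m : ℕ) :
    (m + 1) * wallisCoeff (m + 1)
      = ∑ p ∈ antidiagonal m, wallisLogDerivCoeff p.1 * wallisCoeff p.2 :=
  succ_mul_coeff_succ_of_logDeriv hasFPowerSeriesAt_wallisSeries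
    hasFPowerSeriesAt_logDeriv_wallisSeries (wallisSeries_pos (by norm_num)).ne' m

theorem centralBinomSum_four : centralBinomSum 4 =
    7 / 2 * realZeta 4 - realZeta 2 ^ 2 / 2 - 4 * realZeta 3 * Real.log 2
      + 2 * realZeta 2 * Real.log 2 ^ 2 - 2 / 3 * Real.log 2 ^ 4 := by
  have h₁ := succ_mul_wallisCoeff_succ 0
  have h₂ := succ_mul_wallisCoeff_succ 1
  have h₃ := succ_mul_wallisCoeff_succ 2
  have h₄ := succ_mul_wallisCoeff_succ 3
  simp only [Finset.Nat.sum_antidiagonal_succ, Finset.Nat.antidiagonal_zero, sum_singleton,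
    wallisCoeff, wallisLogDerivCoeff, Nat.reduceAdd] at h₁ h₂ h₃ h₄
  push_cast at h₁ h₂ h₃ h₄
  linear_combination
    (Real.log 2 * (5 / 6 * realZeta 2 - Real.log 2 ^ 2 / 3) - 3 / 2 * realZeta 3) * h₁
      + (realZeta 2 / 4 - Real.log 2 ^ 2 / 6) * h₂ - Real.log 2 / 6 * h₃ - 1 / 4 * h₄

/-- ∑_{n=1}^∞ C(2n,n)/(4ⁿ·n⁴) = (1/40)·π⁴ - 4·ζ(3)·log 2 + (1/3)·π²·log²2 - (2/3)·log⁴2. -/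
theorem centralBinom_inv_n4_sum :
    ((∑' n : ℕ, (Nat.centralBinom (n + 1) : ℝ) /
        ((4 : ℝ) ^ (n + 1) * ((n : ℝ) + 1) ^ 4) : ℝ) : ℂ) =
      (1 / 40) * (Real.pi : ℂ) ^ 4 - 4 * riemannZeta 3 * (Real.log 2 : ℂ)
        + (1 / 3) * (Real.pi : ℂ) ^ 2 * (Real.log 2 : ℂ) ^ 2
        - (2 / 3) * (Real.log 2 : ℂ) ^ 4 := by
  have hsum : ∑' n : ℕ, (Nat.centralBinom (n + 1) : ℝ) / ((4 : ℝ) ^ (n + 1) * ((n : ℝ) + 1) ^ 4)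
      = centralBinomSum 4 := by
    simp only [centralBinomSum, wallisRatio, div_div]
  have hzeta₂ : realZeta 2 = Real.pi ^ 2 / 6 := hasSum_zeta_two.tsum_eq
  have hzeta₃ : riemannZeta 3 = realZeta 3 :=
    mod_cast riemannZeta_natCast_eq_realZeta (k := 3) (by norm_num)
  have hzeta₄ : realZeta 4 = Real.pi ^ 4 / 90 := hasSum_zeta_four.tsum_eq
  rw [hsum, centralBinomSum_four, hzeta₂, hzeta₃, hzeta₄]
  push_cast
  ring
end

section
/- ∑_{n=1}^∞ C(2n,n) / (4ⁿ · n⁵) = 6·ζ(5) - (1/20)·π⁴·log 2 - (1/3)·ζ(3)·π² + 4·ζ(3)·log²2 - (2/9)·π²·log³2 + (4/15)·log⁵2. -/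
/-! For `N ≥ 1` put `a n = C(2n, n) / 4 ^ n`, `xᵢ = 1 / i` and `yᵢ = 1 / (i - 1/2)`. The rational
function `∏ᵢ (1 - yᵢ t) / (1 - xᵢ t)`, with `1 ≤ i ≤ N`, has the partial fraction expansion
`1 / a N - ∑ₘ (a m * a (N - m) / a N) / (1 - t / m)`. Its Taylor coefficients are thus, up to sign,
truncations of the series `∑ a m / m ^ k`, and on the other hand Newton's identities express them
through the power sums `∑ᵢ (xᵢ ^ j - yᵢ ^ j)`. As `N → ∞` these power sums tend to
`(2 - 2 ^ j) * ζ(j)` for `j ≥ 2` and to `-2 log 2` for `j = 1`, while the truncations tend to the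
full series by dominated convergence as soon as `k ≥ 2`. -/

open Finset Filter Topology
open PowerSeries (C X coeff constantCoeff derivative_C derivative_X derivative_one
  derivative_inv' coeff_C_mul coeff_succ_mul_X)
open scoped PowerSeries

section Newton

variable {K : Type*} [Field K]

/-- The complete homogeneous symmetric functions as polynomials in the power sums `p`, through
Newton's identities `n * h n = ∑ i < n, h i * p (n - i)`; the value `p 0` is irrelevant. -/
def hsymmOfPsum (p : ℕ → K) : ℕ → K
  | 0 => 1
  | n + 1 => (∑ i : Fin (n + 1), hsymmOfPsum p i * p (n - i + 1)) / (n + 1)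

lemma hsymmOfPsum_zero (p : ℕ → K) : hsymmOfPsum p 0 = 1 := by
  rw [hsymmOfPsum]

lemma hsymmOfPsum_succ (p : ℕ → K) (n : ℕ) :
    hsymmOfPsum p (n + 1) = (∑ i ∈ range (n + 1), hsymmOfPsum p i * p (n - i + 1)) / (n + 1) := by
  rw [hsymmOfPsum, Fin.sum_univ_eq_sum_range fun i ↦ hsymmOfPsum p i * p (n - i + 1)]

lemma hsymmOfPsum_five [CharZero K] (p : ℕ → K) :
    hsymmOfPsum p 5 = p 1 ^ 5 / 120 + p 1 ^ 3 * p 2 / 12 + p 1 ^ 2 * p 3 / 6 + p 1 * p 2 ^ 2 / 8 +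
      p 1 * p 4 / 4 + p 2 * p 3 / 6 + p 5 / 5 := by
  simp only [hsymmOfPsum_succ, hsymmOfPsum_zero, sum_range_succ, sum_range_zero,
    Nat.reduceAdd, Nat.reduceSub]
  push_cast
  ring

lemma tendsto_hsymmOfPsum [TopologicalSpace K] [IsTopologicalRing K] {ι : Type*}
    {l : Filter ι} {p : ι → ℕ → K} {q : ℕ → K}
    (h : ∀ k, Tendsto (fun i ↦ p i (k + 1)) l (𝓝 (q (k + 1)))) (n : ℕ) :
    Tendsto (fun i ↦ hsymmOfPsum (p i) n) l (𝓝 (hsymmOfPsum q n)) := by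
  induction n using Nat.strong_induction_on with
  | h n ih =>
    cases n with
    | zero => simpa only [hsymmOfPsum_zero] using tendsto_const_nhds
    | succ n =>
      simp only [hsymmOfPsum_succ, div_eq_mul_inv]
      exact (tendsto_finsetSum _ fun i hi ↦ (ih i (mem_range.1 hi)).mul (h _)).mul_const _

lemma coeff_eq_hsymmOfPsum [CharZero K] {F : K⟦X⟧} {p : ℕ → K}
    (h_one : constantCoeff F = 1)
    (h_deriv : d⁄dX K F = F * PowerSeries.mk fun j ↦ p (j + 1)) (n : ℕ) :
    coeff n F = hsymmOfPsum p n := by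
  induction n using Nat.strong_induction_on with
  | h n ih =>
    cases n with
    | zero => rw [PowerSeries.coeff_zero_eq_constantCoeff_apply, h_one, hsymmOfPsum_zero]
    | succ n =>
      have newton := congrArg (coeff n) h_deriv
      rw [PowerSeries.coeff_derivative, PowerSeries.coeff_mul,
        Nat.sum_antidiagonal_eq_sum_range_succ (fun i j ↦ coeff i F * coeff j _)] at newton
      rw [hsymmOfPsum_succ, eq_div_iff (Nat.cast_add_one_ne_zero n), newton]
      refine sum_congr rfl fun i hi ↦ ?_
      rw [ih i (mem_range.1 hi), PowerSeries.coeff_mk]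

lemma coeff_succ_mul_one_sub_C_mul_X (F : K⟦X⟧) (x : K) (n : ℕ) :
    coeff (n + 1) (F * (1 - C x * X)) = coeff (n + 1) F - x * coeff n F := by
  rw [mul_one_sub, mul_left_comm, map_sub, coeff_C_mul, coeff_succ_mul_X]

lemma inv_one_sub_C_mul_X (x : K) :
    (1 - C x * X : K⟦X⟧)⁻¹ = PowerSeries.mk fun j ↦ x ^ j := by
  rw [eq_comm, PowerSeries.eq_inv_iff_mul_eq_one (by simp)]
  ext j
  cases j with
  | zero => simp
  | succ j => simp [coeff_succ_mul_one_sub_C_mul_X, PowerSeries.coeff_one, pow_succ']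

/-- The factor `(1 - y X) / (1 - x X)`, contributed by a positive variable `x` and a negative
variable `y` to a generating function of complete homogeneous symmetric functions. -/
noncomputable def linearRatio (x y : K) : K⟦X⟧ := (1 - C y * X) * (1 - C x * X)⁻¹

lemma derivative_linearRatio (x y : K) :
    d⁄dX K (linearRatio x y) =
      linearRatio x y * PowerSeries.mk fun j ↦ x ^ (j + 1) - y ^ (j + 1) := by
  have mk_pow_succ (z : K) : (PowerSeries.mk fun j ↦ z ^ (j + 1)) = C z * (1 - C z * X)⁻¹ := by
    ext j; simp [inv_one_sub_C_mul_X, pow_succ']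
  have mk_sub : (PowerSeries.mk fun j ↦ x ^ (j + 1) - y ^ (j + 1)) =
      (PowerSeries.mk fun j ↦ x ^ (j + 1)) - PowerSeries.mk fun j ↦ y ^ (j + 1) := rfl
  have cancel : (1 - C y * X : K⟦X⟧) * (1 - C y * X)⁻¹ = 1 :=
    PowerSeries.mul_inv_cancel _ (by simp)
  rw [mk_sub, mk_pow_succ, mk_pow_succ, linearRatio]
  simp only [Derivation.leibniz, derivative_inv', map_sub, smul_eq_mul,
    derivative_one, derivative_C, derivative_X]
  linear_combination C y * (1 - C x * X)⁻¹ * cancel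

lemma derivative_prod_linearRatio {ι : Type*} (s : Finset ι) (x y : ι → K) :
    d⁄dX K (∏ i ∈ s, linearRatio (x i) (y i)) =
      (∏ i ∈ s, linearRatio (x i) (y i)) *
        PowerSeries.mk fun j ↦ ∑ i ∈ s, (x i ^ (j + 1) - y i ^ (j + 1)) := by
  classical
  induction s using Finset.induction_on with
  | empty => ext; simp
  | insert i s hi ih =>
    have mk_add : (PowerSeries.mk fun j ↦ ∑ i ∈ insert i s, (x i ^ (j + 1) - y i ^ (j + 1))) =
        (PowerSeries.mk fun j ↦ x i ^ (j + 1) - y i ^ (j + 1)) +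
          PowerSeries.mk fun j ↦ ∑ i ∈ s, (x i ^ (j + 1) - y i ^ (j + 1)) := by
      ext j; simp [sum_insert hi]
    rw [prod_insert hi, Derivation.leibniz, ih, derivative_linearRatio, mk_add]
    simp only [smul_eq_mul]
    ring

theorem coeff_prod_linearRatio [CharZero K] {ι : Type*} (s : Finset ι) (x y : ι → K) (n : ℕ) :
    coeff n (∏ i ∈ s, linearRatio (x i) (y i)) =
      hsymmOfPsum (fun k ↦ ∑ i ∈ s, (x i ^ k - y i ^ k)) n :=
  coeff_eq_hsymmOfPsum (by simp [map_prod, linearRatio]) (derivative_prod_linearRatio s x y) n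

end Newton

section CentralBinomRatio

/-- The normalized central binomial coefficient `C(2n, n) / 4 ^ n`. -/
noncomputable def centralBinomRatio (n : ℕ) : ℝ := Nat.centralBinom n / 4 ^ n

local notation "a" => centralBinomRatio

lemma centralBinomRatio_pos (n : ℕ) : 0 < a n :=
  div_pos (mod_cast n.centralBinom_pos) (by positivity)

lemma centralBinomRatio_zero : a 0 = 1 := by simp [centralBinomRatio]

lemma succ_mul_centralBinomRatio_succ (n : ℕ) : (n + 1) * a (n + 1) = (n + 1 / 2) * a n := by
  have h : ((n : ℝ) + 1) * (n + 1).centralBinom = 2 * (2 * n + 1) * n.centralBinom :=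
    mod_cast n.succ_mul_centralBinom_succ
  rw [centralBinomRatio, centralBinomRatio, ← mul_div_assoc, h, pow_succ]
  field_simp
  ring

lemma centralBinomRatio_succ (n : ℕ) : a (n + 1) = (n + 1 / 2) / (n + 1) * a n := by
  rw [div_mul_eq_mul_div, ← succ_mul_centralBinomRatio_succ]
  field_simp

lemma centralBinomRatio_mul_le (m n : ℕ) : a m * a n ≤ a (m + n) := by
  induction n with
  | zero => simp [centralBinomRatio_zero]
  | succ n ih =>
    have factor_le : ((n : ℝ) + 1 / 2) / (n + 1) ≤ ((m + n : ℕ) + 1 / 2) / ((m + n : ℕ) + 1) := by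
      rw [div_le_div_iff₀ (by positivity) (by positivity)]
      push_cast
      linarith [m.cast_nonneg (α := ℝ)]
    calc a m * a (n + 1) = (n + 1 / 2) / (n + 1) * (a m * a n) := by
          rw [centralBinomRatio_succ]; ring
      _ ≤ ((m + n : ℕ) + 1 / 2) / ((m + n : ℕ) + 1) * a (m + n) := by
          gcongr
          exact mul_nonneg (centralBinomRatio_pos m).le (centralBinomRatio_pos n).le
      _ = a (m + (n + 1)) := by rw [← add_assoc, centralBinomRatio_succ]

lemma ringChoose_neg_half (n : ℕ) : Ring.choose (-1 / 2 : ℝ) n = (-1) ^ n * a n := by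
  induction n with
  | zero => simp [centralBinomRatio_zero]
  | succ n ih =>
    have h := Ring.choose_smul_choose (-1 / 2 : ℝ) n.le_succ
    rw [Nat.succ_eq_add_one, Nat.choose_succ_self_right, Nat.add_sub_cancel_left,
      Ring.choose_one_right, ih, nsmul_eq_mul, Nat.cast_succ] at h
    apply mul_left_cancel₀ (Nat.cast_add_one_ne_zero n : (n + 1 : ℝ) ≠ 0)
    linear_combination h + (-1) ^ n * succ_mul_centralBinomRatio_succ n

lemma sum_antidiagonal_centralBinomRatio_mul (N : ℕ) :
    ∑ p ∈ antidiagonal N, a p.1 * a p.2 = 1 := by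
  have vandermonde := Ring.add_choose_eq N (Commute.all (-1 / 2 : ℝ) (-1 / 2))
  have choose_neg_one : Ring.choose (-1 / 2 + -1 / 2 : ℝ) N = (-1) ^ N := by
    rw [show (-1 / 2 + -1 / 2 : ℝ) = -1 by norm_num, Ring.choose_neg, add_sub_cancel_left,
      Ring.choose_natCast, Nat.choose_self]
    simp [Units.smul_def]
  have sign_out :
      ∑ p ∈ antidiagonal N, Ring.choose (-1 / 2 : ℝ) p.1 * Ring.choose (-1 / 2 : ℝ) p.2 =
        (-1) ^ N * ∑ p ∈ antidiagonal N, a p.1 * a p.2 := by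
    rw [mul_sum]
    refine sum_congr rfl fun p hp ↦ ?_
    rw [ringChoose_neg_half, ringChoose_neg_half, ← mem_antidiagonal.1 hp]
    ring
  rw [choose_neg_one, sign_out] at vandermonde
  exact (mul_eq_left₀ (by simp)).1 vandermonde.symm

lemma tendsto_centralBinomRatio_div_add (j : ℕ) :
    Tendsto (fun N ↦ a N / a (N + j)) atTop (𝓝 1) := by
  have tendsto_div_succ : Tendsto (fun N ↦ a N / a (N + 1)) atTop (𝓝 1) := by
    have h : Tendsto (fun N : ℕ ↦ 1 + (1 / 2 : ℝ) / (N + 1 / 2)) atTop (𝓝 (1 + 0)) :=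
      tendsto_const_nhds.add (tendsto_const_nhds.div_atTop
        (tendsto_atTop_add_const_right _ _ tendsto_natCast_atTop_atTop))
    rw [add_zero] at h
    refine h.congr fun N ↦ ?_
    have := (centralBinomRatio_pos N).ne'
    rw [centralBinomRatio_succ]
    field_simp
    ring
  induction j with
  | zero => simp [div_self (centralBinomRatio_pos _).ne']
  | succ j ih =>
    simpa [← add_assoc, div_mul_div_cancel₀ (centralBinomRatio_pos _).ne'] using
      ih.mul (tendsto_div_succ.comp (tendsto_add_atTop_nat j))

/-- The truncation `∑ a m * a (N - m) / a N / m ^ k`, with `1 ≤ m ≤ N`, of the series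
`∑ a m / m ^ k`; the summation variable is shifted by one. -/
noncomputable def truncatedSum (N k : ℕ) : ℝ :=
  ∑ m ∈ range N, a (m + 1) * a (N - (m + 1)) / a N / ((m : ℝ) + 1) ^ k

lemma truncatedSum_zero_right (N : ℕ) : truncatedSum N 0 = 1 / a N - 1 := by
  have h := sum_antidiagonal_centralBinomRatio_mul N
  rw [Nat.sum_antidiagonal_eq_sum_range_succ (fun i j ↦ a i * a j), sum_range_succ',
    centralBinomRatio_zero, one_mul, Nat.sub_zero] at h
  have hN := (centralBinomRatio_pos N).ne'
  simp only [truncatedSum, pow_zero, div_one]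
  rw [← sum_div, eq_sub_of_add_eq h, sub_div, div_self hN]

lemma truncatedSum_succ (N k : ℕ) :
    truncatedSum (N + 1) (k + 1) - 1 / ((N : ℝ) + 1) * truncatedSum (N + 1) k =
      truncatedSum N (k + 1) - 1 / ((N : ℝ) + 1 / 2) * truncatedSum N k := by
  simp only [truncatedSum, mul_sum, ← sum_sub_distrib]
  rw [sum_range_succ]
  have last_eq_zero (w : ℝ) : w / ((N : ℝ) + 1) ^ (k + 1) -
      1 / ((N : ℝ) + 1) * (w / ((N : ℝ) + 1) ^ k) = 0 := by
    field_simp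
    ring
  rw [last_eq_zero, add_zero]
  refine sum_congr rfl fun m hm ↦ ?_
  obtain ⟨j, rfl⟩ := Nat.exists_eq_add_of_lt (mem_range.1 hm)
  rw [show m + j + 1 + 1 - (m + 1) = j + 1 by lia, show m + j + 1 - (m + 1) = j by lia,
    centralBinomRatio_succ (m + j + 1), centralBinomRatio_succ j, pow_succ]
  have := (centralBinomRatio_pos (m + j + 1)).ne'
  push_cast
  field_simp
  ring

theorem prod_linearRatio_eq_sub_mk_truncatedSum (N : ℕ) :
    ∏ n ∈ range N, linearRatio (1 / ((n : ℝ) + 1)) (1 / ((n : ℝ) + 1 / 2)) =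
      C (1 / a N) - PowerSeries.mk (truncatedSum N) := by
  induction N with
  | zero => ext; simp [truncatedSum, centralBinomRatio_zero]
  | succ N ih =>
    rw [prod_range_succ, ih, linearRatio, ← mul_assoc, eq_comm,
      PowerSeries.eq_mul_inv_iff_mul_eq (by simp)]
    have ratio : 1 / ((N : ℝ) + 1) * (1 / a (N + 1)) = 1 / ((N : ℝ) + 1 / 2) * (1 / a N) := by
      rw [one_div_mul_one_div, one_div_mul_one_div, succ_mul_centralBinomRatio_succ]
    ext k
    rcases k with _ | _ | k
    · simp [truncatedSum_zero_right]
    · simp only [coeff_succ_mul_one_sub_C_mul_X, map_sub, PowerSeries.coeff_mk, PowerSeries.coeff_C,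
        zero_add, one_ne_zero, if_true, if_false]
      linear_combination -truncatedSum_succ N 0 - ratio
    · simp only [coeff_succ_mul_one_sub_C_mul_X, map_sub, PowerSeries.coeff_mk, PowerSeries.coeff_C,
        Nat.add_eq_zero_iff, one_ne_zero, and_false, if_false]
      linear_combination -truncatedSum_succ N (k + 1)

/-- The power sums `∑ (1 / n ^ k - 1 / (n - 1/2) ^ k)`, with `1 ≤ n ≤ N`, to which Newton's
identities reduce the truncated sums; the summation variable is shifted by one. -/
noncomputable def truncatedPsum (N k : ℕ) : ℝ :=
  ∑ n ∈ range N, ((1 / ((n : ℝ) + 1)) ^ k - (1 / ((n : ℝ) + 1 / 2)) ^ k)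

theorem truncatedSum_succ_eq_neg_hsymmOfPsum (N k : ℕ) :
    truncatedSum N (k + 1) = -hsymmOfPsum (truncatedPsum N) (k + 1) := by
  unfold truncatedPsum
  rw [← coeff_prod_linearRatio, prod_linearRatio_eq_sub_mk_truncatedSum]
  simp

lemma summable_one_div_nat_add_one_pow {k : ℕ} (hk : 1 < k) :
    Summable fun n : ℕ ↦ 1 / ((n : ℝ) + 1) ^ k := by
  simpa using (summable_nat_add_iff 1).2 (Real.summable_one_div_nat_pow.2 hk)

lemma centralBinomRatio_mul_div_le_one {N m : ℕ} (hm : m ≤ N) : a m * a (N - m) / a N ≤ 1 := by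
  rw [div_le_one (centralBinomRatio_pos N)]
  simpa [Nat.add_sub_cancel' hm] using centralBinomRatio_mul_le m (N - m)

theorem tendsto_truncatedSum {k : ℕ} (hk : 1 < k) :
    Tendsto (truncatedSum · k) atTop (𝓝 (∑' m : ℕ, a (m + 1) / ((m : ℝ) + 1) ^ k)) := by
  have eq_tsum (N : ℕ) : truncatedSum N k = ∑' m, (range N : Set ℕ).indicator
      (fun m ↦ a (m + 1) * a (N - (m + 1)) / a N / ((m : ℝ) + 1) ^ k) m :=
    sum_eq_tsum_indicator _ _
  simp only [eq_tsum]
  refine tendsto_tsum_of_dominated_convergence (summable_one_div_nat_add_one_pow hk)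
    (fun m ↦ ?_) (Eventually.of_forall fun N m ↦ ?_)
  · have h := ((tendsto_centralBinomRatio_div_add (m + 1)).const_mul (a (m + 1))).div_const
      (((m : ℝ) + 1) ^ k)
    rw [mul_one] at h
    rw [← tendsto_add_atTop_iff_nat (m + 1)]
    refine h.congr fun N ↦ ?_
    rw [Set.indicator_of_mem (by simp; lia), Nat.add_sub_cancel, ← mul_div_assoc]
  · have weight_nonneg : 0 ≤ a (m + 1) * a (N - (m + 1)) / a N :=
      div_nonneg (mul_nonneg (centralBinomRatio_pos _).le (centralBinomRatio_pos _).le)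
        (centralBinomRatio_pos _).le
    rw [norm_indicator_eq_indicator_norm]
    refine Set.indicator_apply_le' (fun hm ↦ ?_) fun _ ↦ by positivity
    rw [Real.norm_of_nonneg (div_nonneg weight_nonneg (by positivity))]
    gcongr
    exact centralBinomRatio_mul_div_le_one (by simpa using hm)

end CentralBinomRatio

/-- The limit of `truncatedPsum N k` as `N → ∞`, for `k ≥ 1`: at `k = 1`, where `ζ` has
its pole, the limit of `(2 - 2 ^ s) * ζ(s)` as `s → 1`. -/
noncomputable def zetaPsum (k : ℕ) : ℝ :=
  if k = 1 then -2 * Real.log 2 else (2 - 2 ^ k) * (riemannZeta k).re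

lemma truncatedPsum_eq_sub (N k : ℕ) :
    truncatedPsum N k =
      2 * ∑ n ∈ range N, 1 / ((n : ℝ) + 1) ^ k -
        2 ^ k * ∑ n ∈ range (2 * N), 1 / ((n : ℝ) + 1) ^ k := by
  induction N with
  | zero => simp [truncatedPsum]
  | succ N ih =>
    have odd_term : (1 / ((N : ℝ) + 1 / 2)) ^ k = 2 ^ k * (1 / (2 * (N : ℝ) + 1) ^ k) := by
      rw [← one_div_pow, ← mul_pow]; congr 1; field_simp
    have even_term : (1 / ((N : ℝ) + 1)) ^ k = 2 ^ k * (1 / (2 * (N : ℝ) + 1 + 1) ^ k) := by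
      rw [← one_div_pow, ← mul_pow]; congr 1; field_simp; ring
    rw [truncatedPsum, sum_range_succ, ← truncatedPsum, ih, mul_add_one,
      sum_range_succ, sum_range_succ, sum_range_succ]
    push_cast
    rw [← one_div_pow ((N : ℝ) + 1)]
    linear_combination -even_term - odd_term

lemma ofReal_re_riemannZeta (x : ℝ) : ((riemannZeta x).re : ℂ) = riemannZeta x :=
  Complex.conj_eq_iff_re.1 (by rw [← riemannZeta_conj, Complex.conj_ofReal])

lemma hasSum_one_div_nat_add_one_pow {k : ℕ} (hk : 1 < k) :
    HasSum (fun n : ℕ ↦ 1 / ((n : ℝ) + 1) ^ k) (riemannZeta k).re := by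
  have h := zeta_eq_tsum_one_div_nat_add_one_cpow (s := k) (by simpa using hk)
  convert (summable_one_div_nat_add_one_pow hk).hasSum
  rw [h, ← Complex.ofReal_re (∑' n : ℕ, 1 / ((n : ℝ) + 1) ^ k)]
  push_cast
  simp

theorem tendsto_truncatedPsum {k : ℕ} (hk : 0 < k) :
    Tendsto (truncatedPsum · k) atTop (𝓝 (zetaPsum k)) := by
  have two_mul_atTop : Tendsto (fun N : ℕ ↦ 2 * N) atTop atTop :=
    tendsto_id.const_mul_atTop' two_pos
  simp only [truncatedPsum_eq_sub, zetaPsum]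
  split_ifs with hk_one
  · have h := Real.tendsto_harmonic_sub_log
    have h_diff := ((h.sub (h.comp two_mul_atTop)).sub_const (Real.log 2)).const_mul 2
    rw [sub_self, zero_sub, mul_neg, ← neg_mul] at h_diff
    refine h_diff.congr' ?_
    filter_upwards [eventually_gt_atTop 0] with N hN
    simp only [hk_one, Function.comp_apply, harmonic, Nat.cast_mul, Nat.cast_ofNat,
      Real.log_mul two_ne_zero (Nat.cast_ne_zero.2 hN.ne')]
    push_cast
    simp only [one_div, pow_one]
    ring
  · have h := (hasSum_one_div_nat_add_one_pow (by lia : 1 < k)).tendsto_sum_nat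
    rw [sub_mul]
    exact (h.const_mul 2).sub ((h.comp two_mul_atTop).const_mul (2 ^ k))

theorem tsum_centralBinomRatio_div_pow {k : ℕ} (hk : 1 < k) :
    ∑' n : ℕ, centralBinomRatio (n + 1) / ((n : ℝ) + 1) ^ k = -hsymmOfPsum zetaPsum k := by
  obtain ⟨k, rfl⟩ := Nat.exists_eq_succ_of_ne_zero (by lia : k ≠ 0)
  have h := tendsto_hsymmOfPsum (fun j ↦ tendsto_truncatedPsum (Nat.add_one_pos j)) (k + 1)
  refine tendsto_nhds_unique (tendsto_truncatedSum hk) (h.neg.congr fun N ↦ ?_)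
  rw [truncatedSum_succ_eq_neg_hsymmOfPsum]

/-- ∑_{n=1}^∞ C(2n,n)/(4ⁿ·n⁵) = 6·ζ(5) - (1/20)·π⁴·log 2 - (1/3)·ζ(3)·π²
+ 4·ζ(3)·log²2 - (2/9)·π²·log³2 + (4/15)·log⁵2. -/
theorem centralBinom_inv_n5_sum :
    ((∑' n : ℕ, (Nat.centralBinom (n + 1) : ℝ) /
        ((4 : ℝ) ^ (n + 1) * ((n : ℝ) + 1) ^ 5) : ℝ) : ℂ) =
      6 * riemannZeta 5 - (1 / 20) * (Real.pi : ℂ) ^ 4 * (Real.log 2 : ℂ)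
        - (1 / 3) * riemannZeta 3 * (Real.pi : ℂ) ^ 2
        + 4 * riemannZeta 3 * (Real.log 2 : ℂ) ^ 2
        - (2 / 9) * (Real.pi : ℂ) ^ 2 * (Real.log 2 : ℂ) ^ 3
        + (4 / 15) * (Real.log 2 : ℂ) ^ 5 := by
  have h := tsum_centralBinomRatio_div_pow (k := 5) (by norm_num)
  have zeta_two : ((riemannZeta 2).re : ℂ) = Real.pi ^ 2 / 6 :=
    riemannZeta_two ▸ mod_cast ofReal_re_riemannZeta 2
  have zeta_three : ((riemannZeta 3).re : ℂ) = riemannZeta 3 := mod_cast ofReal_re_riemannZeta 3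
  have zeta_four : ((riemannZeta 4).re : ℂ) = Real.pi ^ 4 / 90 :=
    riemannZeta_four ▸ mod_cast ofReal_re_riemannZeta 4
  have zeta_five : ((riemannZeta 5).re : ℂ) = riemannZeta 5 := mod_cast ofReal_re_riemannZeta 5
  simp only [centralBinomRatio, div_div, hsymmOfPsum_five, zetaPsum, Nat.reduceEqDiff, if_true,
    if_false] at h
  rw [h]
  push_cast
  rw [zeta_two, zeta_three, zeta_four, zeta_five]
  ring
end
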